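/- Let s be an even integer with s ≥ 6, let N ≥ 2s, and let x,y ∈ SO(3) with ω(y⁻¹x) ≥ π/(2(N+1)); write ω = ω(y⁻¹x). Then for all i,k ∈ {1,2,3}: |X_i^x X_i^x X_k^y σ_N(x,y)| ≤ 1.2·c_{3,s}/((N+1)^{s−3}·ω^s); and for i,j,n pairwise distinct: |X_j^x X_i^x σ_N(x,y) − (ε_{jin}/2)·X_n^x σ_N(x,y)| ≤ c_{2,s}/((N+1)^{s−2}·ω^s), and for every k ∈ {i,j,n}: |X_j^x X_i^x X_k^y σ_N(x,y) − (ε_{jin}/2)·X_n^x X_k^y σ_N(x,y)| ≤ 1.2·c_{3,s}/((N+1)^{s−3}·ω^s). -/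

import Mathlib

noncomputable section

abbrev Mat3 := Matrix (Fin 3) (Fin 3) ℝ

/-- membership in SO(3) -/
def IsSO3 (x : Mat3) : Prop := x.transpose * x = 1 ∧ x.det = 1

/-- rotation angle -/
def rotAngle (x : Mat3) : ℝ := Real.arccos ((Matrix.trace x - 1) / 2)

/-- generators of so(3) -/
def Lgen : Fin 3 → Mat3 :=
  ![!![0, 0, 0; 0, 0, -1; 0, 1, 0],
    !![0, 0, 1; 0, 0, 0; -1, 0, 0],
    !![0, -1, 0; 1, 0, 0; 0, 0, 0]]

/-- derivative in the first variable along generator `i` -/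
def Xx (i : Fin 3) (f : Mat3 → Mat3 → ℝ) : Mat3 → Mat3 → ℝ :=
  fun x y => deriv (fun t : ℝ => f (x * NormedSpace.exp (t • Lgen i)) y) 0

/-- derivative in the second variable along generator `i` -/
def Xy (i : Fin 3) (f : Mat3 → Mat3 → ℝ) : Mat3 → Mat3 → ℝ :=
  fun x y => deriv (fun t : ℝ => f x (y * NormedSpace.exp (t • Lgen i))) 0

/-- iterated integrals of the sign of the Chebyshev polynomial: the perfect B-spline chain -/
def fspline (s : ℕ) : ℕ → ℝ → ℝ
  | 0 => fun x => (-1 : ℝ) ^ (s - 1) * Real.sign ((Polynomial.Chebyshev.U ℝ ((s : ℤ) - 1)).eval x)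
  | (k + 1) => fun x => ∫ t in (-1 : ℝ)..x, fspline s k t

/-- the scaled perfect B-spline g̃_{s-1} -/
def gtilde (s : ℕ) (x : ℝ) : ℝ := fspline s (s - 1) (2 * x)

/-- discrete norm ‖g̃‖_{1,N} -/
def gnorm (s N : ℕ) : ℝ :=
  ∑ k ∈ Finset.Icc (-(N : ℤ)) (N : ℤ), gtilde s ((k : ℝ) / (2 * ((N : ℝ) + 1)))

/-- the trigonometric kernel σ̃_N (real-valued) -/
def sigmaT (s N : ℕ) (t : ℝ) : ℝ :=
  ((1 / (gnorm s N : ℂ)) *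
      ∑ k ∈ Finset.Icc (-(N : ℤ)) (N : ℤ),
        (gtilde s ((k : ℝ) / (2 * ((N : ℝ) + 1))) : ℂ) * Complex.exp ((k : ℂ) * t * Complex.I)).re

/-- the zonal kernel σ_N on SO(3) -/
def sigmaK (s N : ℕ) (x y : Mat3) : ℝ := sigmaT s N (rotAngle (y⁻¹ * x))

/-- rotation axis components -/
def axisComp : Fin 3 → Mat3 → ℝ :=
  ![fun x => (x 2 1 - x 1 2) / (2 * Real.sin (rotAngle x)),
    fun x => (x 0 2 - x 2 0) / (2 * Real.sin (rotAngle x)),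
    fun x => (x 1 0 - x 0 1) / (2 * Real.sin (rotAngle x))]

/-- Levi-Civita symbol on `Fin 3` -/
def eps3 (a b c : Fin 3) : ℝ :=
  if (a, b, c) = (0, 1, 2) ∨ (a, b, c) = (1, 2, 0) ∨ (a, b, c) = (2, 0, 1) then 1
  else if (a, b, c) = (2, 1, 0) ∨ (a, b, c) = (1, 0, 2) ∨ (a, b, c) = (0, 2, 1) then -1
  else 0

/-- constants c_{l,s} -/
def cConst : ℕ → ℕ → ℝ
  | 0, s => 1.02 * (Nat.factorial (s - 1)) * 2 ^ s * s
  | 1, s => 1.02 * (Nat.factorial (s - 1)) * 2 ^ s * (2 * s)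
  | 2, s => 1.02 * (Nat.factorial (s - 1)) * 2 ^ s * (4 * s + 1)
  | _, s => 1.02 * (Nat.factorial (s - 1)) * 2 ^ s * (9 * s - 2)

/-- ζ(m) for natural m -/
def zetaNat (m : ℕ) : ℝ := ∑' n : ℕ, (1 : ℝ) / ((n : ℝ) + 1) ^ m

/-- constants C_{i,s} = 124 c_{i,s} ζ(s-2) -/
def CConst (i s : ℕ) : ℝ := 124 * cConst i s * zetaNat (s - 2)

end

open scoped Real

section

open MeasureTheory

/-- The zeros of `U_{s-1}` together with the endpoints `±1`, in increasing order. -/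
noncomputable def knot (s k : ℕ) : ℝ := -Real.cos (k * (π / s))

lemma knot_zero (s : ℕ) : knot s 0 = -1 := by simp [knot]

lemma knot_self {s : ℕ} (hs : s ≠ 0) : knot s s = 1 := by
  have : (s : ℝ) * (π / s) = π := by field_simp
  simp [knot, this]

lemma knot_angle_mem {s k : ℕ} (hk : k ≤ s) : (k : ℝ) * (π / s) ∈ Set.Icc 0 π := by
  rcases Nat.eq_zero_or_pos s with rfl | hs
  · simp [Real.pi_pos.le]
  have hs' : (0 : ℝ) < s := by exact_mod_cast hs
  have hk' : (k : ℝ) ≤ s := by exact_mod_cast hk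
  refine ⟨by positivity, ?_⟩
  rw [mul_div_assoc', div_le_iff₀ hs']
  nlinarith [Real.pi_pos]

lemma knot_lt_succ {s k : ℕ} (hk : k < s) : knot s k < knot s (k + 1) := by
  have hs' : (0 : ℝ) < s := by exact_mod_cast (Nat.zero_le k).trans_lt hk
  refine neg_lt_neg (Real.strictAntiOn_cos (knot_angle_mem hk.le)
    (knot_angle_mem (Nat.succ_le_of_lt hk)) ?_)
  have : 0 < π / s := by positivity
  push_cast
  nlinarith

lemma knot_mem (s k : ℕ) : knot s k ∈ Set.Icc (-1 : ℝ) 1 :=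
  ⟨neg_le_neg (Real.cos_le_one _), by unfold knot; linarith [Real.neg_one_le_cos (k * (π / s))]⟩

lemma fspline_zero_eq {s k : ℕ} (hs : Even s) (hk : k < s) {x : ℝ}
    (hx : x ∈ Set.Ioo (knot s k) (knot s (k + 1))) : fspline s 0 x = (-1) ^ k := by
  have hs0 : 0 < s := (Nat.zero_le k).trans_lt hk
  have hs' : (0 : ℝ) < s := by exact_mod_cast hs0
  obtain ⟨h1, h2⟩ := hx
  have hlo : -1 < x := (knot_mem s k).1.trans_lt h1
  have hhi : x < 1 := h2.trans_le (knot_mem s (k + 1)).2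
  set ψ := Real.arccos (-x) with hψ
  have hcos : Real.cos ψ = -x := Real.cos_arccos (by linarith) (by linarith)
  have hψ0 : 0 < ψ := Real.arccos_pos.2 (by linarith)
  have hψπ : ψ < π := by
    refine lt_of_le_of_ne (Real.arccos_le_pi _) fun h => ?_
    rw [h, Real.cos_pi] at hcos; linarith
  have hmem : ψ ∈ Set.Icc 0 π := ⟨hψ0.le, hψπ.le⟩
  have ha : (k : ℝ) * (π / s) < ψ := by
    refine (Real.strictAntiOn_cos.lt_iff_gt hmem (knot_angle_mem hk.le)).1 ?_
    unfold knot at h1; linarith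
  have hb : ψ < ((k + 1 : ℕ) : ℝ) * (π / s) := by
    refine (Real.strictAntiOn_cos.lt_iff_gt (knot_angle_mem (Nat.succ_le_of_lt hk)) hmem).1 ?_
    unfold knot at h2; linarith
  have ha' : (k : ℝ) * π < s * ψ := by
    rw [mul_div_assoc', div_lt_iff₀ hs'] at ha; linarith
  have hb' : s * ψ < (k + 1) * π := by
    rw [mul_div_assoc', lt_div_iff₀ hs'] at hb; push_cast at hb; linarith
  have hpos : 0 < (-1) ^ k * Real.sin (s * ψ) := by
    rw [← Real.sin_sub_nat_mul_pi]
    exact Real.sin_pos_of_pos_of_lt_pi (by linarith) (by linarith)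
  have hsin : 0 < Real.sin ψ := Real.sin_pos_of_pos_of_lt_pi hψ0 hψπ
  have hU := Polynomial.Chebyshev.U_real_cos (π - ψ) ((s : ℤ) - 1)
  rw [Real.cos_pi_sub, Real.sin_pi_sub, hcos, neg_neg] at hU
  have hsin' : Real.sin (((((s : ℤ) - 1 : ℤ) : ℝ) + 1) * (π - ψ)) = -Real.sin (s * ψ) := by
    have : ((((s : ℤ) - 1 : ℤ) : ℝ) + 1) * (π - ψ) = -(s * ψ - s * π) := by push_cast; ring
    rw [this, Real.sin_neg, Real.sin_sub_nat_mul_pi, hs.neg_one_pow, one_mul]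
  rw [hsin'] at hU
  have hodd : Odd (s - 1) := Nat.Even.sub_odd hs0 hs odd_one
  simp only [fspline, hodd.neg_one_pow]
  rcases neg_one_pow_eq_or ℝ k with h | h <;> rw [h] at hpos ⊢
  · rw [Real.sign_of_neg (by nlinarith)]; ring
  · rw [Real.sign_of_pos (by nlinarith)]; ring

lemma measurable_real_sign : Measurable Real.sign :=
  Measurable.ite measurableSet_Iio measurable_const
    (Measurable.ite measurableSet_Ioi measurable_const measurable_const)

lemma abs_fspline_zero_le (s : ℕ) (x : ℝ) : |fspline s 0 x| ≤ 1 := by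
  rw [fspline, abs_mul, abs_pow, abs_neg, abs_one, one_pow, one_mul]
  rcases Real.sign_apply_eq ((Polynomial.Chebyshev.U ℝ ((s : ℤ) - 1)).eval x) with h | h | h <;>
    simp [h]

lemma measurable_fspline_zero (s : ℕ) : Measurable (fspline s 0) :=
  (measurable_real_sign.comp (Polynomial.continuous _).measurable).const_mul _

lemma intervalIntegrable_fspline_zero (s : ℕ) (a b : ℝ) :
    IntervalIntegrable (fspline s 0) volume a b :=
  (intervalIntegrable_const (c := (1 : ℝ))).mono_fun
    (measurable_fspline_zero s).aestronglyMeasurable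
    (Filter.Eventually.of_forall fun x => by simpa using abs_fspline_zero_le s x)

lemma fspline_succ (s k : ℕ) (x : ℝ) :
    fspline s (k + 1) x = ∫ t in (-1 : ℝ)..x, fspline s k t := rfl

lemma intervalIntegrable_fspline (s : ℕ) : ∀ (k : ℕ) (a b : ℝ),
    IntervalIntegrable (fspline s k) volume a b
  | 0 => intervalIntegrable_fspline_zero s
  | k + 1 => fun _ _ => (intervalIntegral.continuous_primitive
      (intervalIntegrable_fspline s k) (-1)).intervalIntegrable _ _

lemma continuous_fspline_succ (s k : ℕ) : Continuous (fspline s (k + 1)) :=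
  intervalIntegral.continuous_primitive (intervalIntegrable_fspline s k) (-1)

lemma continuousAt_fspline_zero {s : ℕ} {x : ℝ}
    (hx : (Polynomial.Chebyshev.U ℝ ((s : ℤ) - 1)).eval x ≠ 0) :
    ContinuousAt (fspline s 0) x := by
  have hc := (Polynomial.Chebyshev.U ℝ ((s : ℤ) - 1)).continuous.continuousAt (x := x)
  refine continuousAt_const.mul ?_
  rcases hx.lt_or_gt with h | h
  · refine (continuousAt_const (y := (-1 : ℝ))).congr ?_
    filter_upwards [hc.eventually_lt continuousAt_const h] with y hy
    rw [Real.sign_of_neg hy]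
  · refine (continuousAt_const (y := (1 : ℝ))).congr ?_
    filter_upwards [continuousAt_const.eventually_lt hc h] with y hy
    rw [Real.sign_of_pos hy]

/-- Off the zeros of `U_{s-1}`, every iterated integral is an antiderivative of its predecessor. -/
lemma hasDerivAt_fspline_succ {s : ℕ} (k : ℕ) {x : ℝ}
    (hx : (Polynomial.Chebyshev.U ℝ ((s : ℤ) - 1)).eval x ≠ 0) :
    HasDerivAt (fspline s (k + 1)) (fspline s k x) x := by
  have hc : ContinuousAt (fspline s k) x := by
    cases k with
    | zero => exact continuousAt_fspline_zero hx
    | succ k => exact (continuous_fspline_succ s k).continuousAt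
  have hm : StronglyMeasurable (fspline s k) := by
    cases k with
    | zero => exact (measurable_fspline_zero s).stronglyMeasurable
    | succ k => exact (continuous_fspline_succ s k).stronglyMeasurable
  exact intervalIntegral.integral_hasDerivAt_right (intervalIntegrable_fspline s k _ _)
    hm.stronglyMeasurableAtFilter hc

lemma chebyshev_U_zeros_countable {s : ℕ} (hs : s ≠ 0) :
    {x : ℝ | (Polynomial.Chebyshev.U ℝ ((s : ℤ) - 1)).eval x = 0}.Countable := by
  have h0 : Polynomial.Chebyshev.U ℝ ((s : ℤ) - 1) ≠ 0 := by
    intro h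
    have := Polynomial.Chebyshev.U_eval_one (R := ℝ) ((s : ℤ) - 1)
    rw [h] at this
    simp at this
    exact hs (by exact_mod_cast this.symm)
  exact (Polynomial.finite_setOfPred_isRoot h0).countable

/-- Integration by parts against a smooth complex function on `[-1, 1]`. -/
lemma integral_fspline_mul_deriv {s : ℕ} (hs : s ≠ 0) (k : ℕ) {φ φ' : ℝ → ℂ}
    (hφ : ∀ x, HasDerivAt φ (φ' x) x) (hφ' : Continuous φ') :
    ∫ x in (-1 : ℝ)..1, (fspline s (k + 1) x : ℂ) * φ' x =
      fspline s (k + 1) 1 * φ 1 - ∫ x in (-1 : ℝ)..1, (fspline s k x : ℂ) * φ x := by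
  have hφc : Continuous φ := continuous_iff_continuousAt.2 fun x => (hφ x).continuousAt
  have hcf : Continuous fun x => (fspline s (k + 1) x : ℂ) :=
    Complex.continuous_ofReal.comp (continuous_fspline_succ s k)
  have hi1 : IntervalIntegrable (fun x => (fspline s k x : ℂ) * φ x) volume (-1) 1 :=
    IntervalIntegrable.mul_continuousOn ⟨(intervalIntegrable_fspline s k (-1) 1).1.ofReal,
      (intervalIntegrable_fspline s k (-1) 1).2.ofReal⟩ hφc.continuousOn
  have hi2 : IntervalIntegrable (fun x => (fspline s (k + 1) x : ℂ) * φ' x) volume (-1) 1 :=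
    (hcf.mul hφ').intervalIntegrable _ _
  have key := integral_eq_of_hasDerivAt_off_countable
    (fun x => (fspline s (k + 1) x : ℂ) * φ x)
    (fun x => (fspline s k x : ℂ) * φ x + (fspline s (k + 1) x : ℂ) * φ' x) (a := -1) (b := 1)
    (chebyshev_U_zeros_countable hs) (hcf.mul hφc).continuousOn
    (fun x hx => ((hasDerivAt_fspline_succ k hx.2).ofReal_comp).mul (hφ x)) (hi1.add hi2)
  rw [intervalIntegral.integral_add hi1 hi2] at key
  have h0 : fspline s (k + 1) (-1) = 0 := by simp [fspline_succ]
  rw [h0] at key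
  rw [eq_sub_iff_add_eq, add_comm, key]
  simp

lemma integral_fspline_zero_mul_of_mem {s k : ℕ} (hs : Even s) (hk : k < s) (φ : ℝ → ℂ) {x : ℝ}
    (hx : x ∈ Set.Icc (knot s k) (knot s (k + 1))) :
    ∫ t in knot s k..x, (fspline s 0 t : ℂ) * φ t = (-1) ^ k * ∫ t in knot s k..x, φ t := by
  rw [← intervalIntegral.integral_const_mul, intervalIntegral.integral_of_le hx.1,
    intervalIntegral.integral_of_le hx.1, integral_Ioc_eq_integral_Ioo,
    integral_Ioc_eq_integral_Ioo]
  refine setIntegral_congr_fun measurableSet_Ioo fun t ht => ?_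
  simp only [fspline_zero_eq hs hk ⟨ht.1, ht.2.trans_le hx.2⟩]
  push_cast
  rfl

lemma integral_fspline_zero_mul_deriv {s : ℕ} (hs : Even s) (hs0 : s ≠ 0) {φ φ' : ℝ → ℂ}
    (hφ : ∀ x, HasDerivAt φ (φ' x) x) (hφ' : Continuous φ') :
    ∫ x in (-1 : ℝ)..1, (fspline s 0 x : ℂ) * φ' x =
      ∑ k ∈ Finset.range s, (-1) ^ k * (φ (knot s (k + 1)) - φ (knot s k)) := by
  have hinc : ∀ k < s, IntervalIntegrable (fun x => (fspline s 0 x : ℂ) * φ' x) volume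
      (knot s k) (knot s (k + 1)) := fun k _ =>
    IntervalIntegrable.mul_continuousOn ⟨(intervalIntegrable_fspline s 0 _ _).1.ofReal,
      (intervalIntegrable_fspline s 0 _ _).2.ofReal⟩ hφ'.continuousOn
  have h := intervalIntegral.sum_integral_adjacent_intervals hinc
  rw [knot_zero, knot_self hs0] at h
  rw [← h]
  refine Finset.sum_congr rfl fun k hk => ?_
  have hk' := Finset.mem_range.1 hk
  rw [integral_fspline_zero_mul_of_mem hs hk' _ ⟨(knot_lt_succ hk').le, le_rfl⟩,
    intervalIntegral.integral_eq_sub_of_hasDerivAt (fun x _ => hφ x) (hφ'.intervalIntegrable _ _)]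

/-- The alternating sum of the increments of `h` over the grid `k π / s`. -/
noncomputable def altSum (s : ℕ) (h : ℝ → ℝ) : ℝ :=
  ∑ k ∈ Finset.range s, (-1) ^ k * (h (k * (π / s)) - h ((k + 1 : ℕ) * (π / s)))

lemma altSum_add (s : ℕ) (f g : ℝ → ℝ) :
    altSum s (fun θ => f θ + g θ) = altSum s f + altSum s g := by
  simp only [altSum, ← Finset.sum_add_distrib]
  exact Finset.sum_congr rfl fun k _ => by ring

lemma altSum_const_mul (s : ℕ) (c : ℝ) (f : ℝ → ℝ) :
    altSum s (fun θ => c * f θ) = c * altSum s f := by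
  simp only [altSum, Finset.mul_sum]
  exact Finset.sum_congr rfl fun k _ => by ring

lemma altSum_cos_eq_zero {s : ℕ} {m : ℤ} (hm : |m| < s) :
    altSum s (fun θ => Real.cos (m * θ)) = 0 := by
  have hs : (0 : ℝ) < s := by exact_mod_cast (abs_nonneg m).trans_lt hm
  set α : ℝ := π / s with hα
  have key : ∀ n : ℕ, Real.cos (m * α / 2) * ∑ k ∈ Finset.range n,
      (-1) ^ k * (Real.cos (m * (k * α)) - Real.cos (m * ((k + 1 : ℕ) * α))) =
      -((-1) ^ n * Real.sin (m * α / 2) * Real.sin (m * (n * α))) := by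
    intro n
    induction n with
    | zero => simp
    | succ n ih =>
      rw [Finset.sum_range_succ, mul_add, ih]
      have e1 : (m : ℝ) * (n * α) = (m * ((2 * n + 1) * α / 2)) - m * α / 2 := by ring
      have e2 : (m : ℝ) * ((n + 1 : ℕ) * α) = (m * ((2 * n + 1) * α / 2)) + m * α / 2 := by
        push_cast; ring
      rw [e1, e2, Real.cos_sub, Real.cos_add, Real.sin_sub, Real.sin_add]
      ring
  have hcos : Real.cos (m * α / 2) ≠ 0 := by
    have hm' : |(m : ℝ)| < s := by exact_mod_cast hm
    have hlt : |(m : ℝ) * α / 2| < π / 2 := by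
      rw [abs_div, abs_mul, abs_of_pos (show 0 < α by positivity), abs_two, hα]
      have : |(m : ℝ)| * (π / s) < π := by
        rw [mul_div_assoc', div_lt_iff₀ hs]; nlinarith [Real.pi_pos]
      linarith
    exact (Real.cos_pos_of_mem_Ioo ⟨(abs_lt.1 hlt).1, (abs_lt.1 hlt).2⟩).ne'
  have h := key s
  have hsα : (s : ℝ) * α = π := by rw [hα]; field_simp
  rw [hsα, Real.sin_int_mul_pi, mul_zero, neg_zero] at h
  exact (mul_eq_zero.1 h).resolve_left hcos

lemma altSum_cos_self {s : ℕ} (hs : s ≠ 0) : altSum s (fun θ => Real.cos (s * θ)) = 2 * s := by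
  have h : ∀ k : ℕ, Real.cos (s * (k * (π / s))) = (-1) ^ k := fun k => by
    rw [← Real.cos_nat_mul_pi k]; congr 1; field_simp
  simp only [altSum, h]
  have : ∀ k ∈ Finset.range s, ((-1 : ℝ) ^ k * ((-1) ^ k - (-1) ^ (k + 1))) = 2 := fun k _ => by
    rw [pow_succ]
    rcases neg_one_pow_eq_or ℝ k with h | h <;> rw [h] <;> norm_num
  rw [Finset.sum_congr rfl this]
  simp [mul_comm]

lemma altSum_succ (s j : ℕ) (m : ℝ) :
    altSum s (fun θ => (1 + Real.cos θ) ^ (j + 1) * Real.cos (m * θ)) =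
      altSum s (fun θ => (1 + Real.cos θ) ^ j * Real.cos (m * θ)) +
      1 / 2 * altSum s (fun θ => (1 + Real.cos θ) ^ j * Real.cos ((m + 1) * θ)) +
      1 / 2 * altSum s (fun θ => (1 + Real.cos θ) ^ j * Real.cos ((m - 1) * θ)) := by
  rw [← altSum_const_mul, ← altSum_const_mul, ← altSum_add, ← altSum_add]
  congr 1
  funext θ
  rw [add_mul, sub_mul, one_mul, Real.cos_add, Real.cos_sub]
  ring

lemma altSum_pow_eq_zero {s : ℕ} : ∀ (j : ℕ) (m : ℤ), |m| + j < s →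
    altSum s (fun θ => (1 + Real.cos θ) ^ j * Real.cos (m * θ)) = 0
  | 0, m, h => by simpa using altSum_cos_eq_zero (by simpa using h)
  | j + 1, m, h => by
    push_cast at h
    have h0 := altSum_pow_eq_zero (s := s) j m (by omega)
    have h1 := altSum_pow_eq_zero (s := s) j (m + 1) (by
      have := abs_add_le m 1; rw [abs_one] at this; omega)
    have h2 := altSum_pow_eq_zero (s := s) j (m - 1) (by
      have := abs_sub m 1; rw [abs_one] at this; omega)
    push_cast at h1 h2
    rw [altSum_succ, h0, h1, h2]
    ring

lemma altSum_pow_top {s : ℕ} (hs : s ≠ 0) : ∀ j m : ℕ, 1 ≤ m → m + j = s →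
    altSum s (fun θ => (1 + Real.cos θ) ^ j * Real.cos (m * θ)) = (1 / 2) ^ j * (2 * s)
  | 0, m, _, h => by
    obtain rfl : m = s := h
    simpa using altSum_cos_self hs
  | j + 1, m, hm, h => by
    have h0 := altSum_pow_eq_zero (s := s) j m (by rw [abs_of_nonneg (by omega)]; omega)
    have h1 := altSum_pow_top hs j (m + 1) (by omega) (by omega)
    have h2 := altSum_pow_eq_zero (s := s) j (m - 1) (by rw [abs_of_nonneg (by omega)]; omega)
    push_cast at h0 h1 h2
    rw [altSum_succ, h0, h1, h2]
    ring

lemma altSum_one_add_cos_pow {s : ℕ} (hs : 2 ≤ s) :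
    altSum s (fun θ => (1 + Real.cos θ) ^ s) = (1 / 2) ^ (s - 1) * (2 * s) := by
  obtain ⟨j, rfl⟩ : ∃ j, s = j + 1 := ⟨s - 1, by omega⟩
  have h := altSum_succ (j + 1) j 0
  have h0 := altSum_pow_eq_zero (s := j + 1) j 0 (by simp)
  have h1 := altSum_pow_top (s := j + 1) (by omega) j 1 le_rfl (by omega)
  simp only [zero_mul, Real.cos_zero, mul_one, zero_add, one_mul, zero_sub, neg_mul, Real.cos_neg,
    Nat.cast_one, Int.cast_zero] at h h0 h1
  rw [h, h0, h1]
  simp only [Nat.add_sub_cancel]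
  ring

lemma altSum_one_add_cos_pow_eq_zero {s j : ℕ} (hj : j < s) :
    altSum s (fun θ => (1 + Real.cos θ) ^ j) = 0 := by
  have h0 := altSum_pow_eq_zero (s := s) j 0 (by simpa using hj)
  simpa using h0

lemma integral_fspline_zero_mul_one_sub_pow {s : ℕ} (hs : Even s) (hs0 : s ≠ 0) (k : ℕ) :
    ∫ x in (-1 : ℝ)..1, (fspline s 0 x : ℂ) * (1 - x) ^ k =
      (altSum s (fun θ => (1 + Real.cos θ) ^ (k + 1)) / (k + 1) : ℝ) := by
  have hd : ∀ x : ℝ, HasDerivAt (fun x : ℝ => -((1 - (x : ℂ)) ^ (k + 1) / (k + 1)))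
      ((1 - (x : ℂ)) ^ k) x := fun x => by
    have h1 : HasDerivAt (fun x : ℝ => 1 - (x : ℂ)) (-1) x := by
      simpa using (Complex.ofRealCLM.hasDerivAt (x := x)).const_sub 1
    have h2 := ((h1.pow (k + 1)).div_const ((k : ℂ) + 1)).neg
    refine h2.congr_deriv ?_
    have : (k : ℂ) + 1 ≠ 0 := by exact_mod_cast Nat.succ_ne_zero k
    push_cast
    field_simp
  rw [integral_fspline_zero_mul_deriv hs hs0 hd (by fun_prop), altSum]
  push_cast
  rw [Finset.sum_div]
  refine Finset.sum_congr rfl fun i _ => ?_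
  simp only [knot]
  push_cast
  ring

lemma integral_fspline_mul_one_sub_pow {s : ℕ} (hs0 : s ≠ 0) : ∀ k j : ℕ,
    ∫ x in (-1 : ℝ)..1, (fspline s j x : ℂ) * (1 - x) ^ k =
      (k.factorial : ℂ) * fspline s (j + k + 1) 1
  | 0, j => by
    simp only [pow_zero, mul_one, Nat.factorial_zero, Nat.cast_one, one_mul, add_zero]
    rw [intervalIntegral.integral_ofReal, fspline_succ]
  | k + 1, j => by
    have hd : ∀ x : ℝ, HasDerivAt (fun x : ℝ => (1 - (x : ℂ)) ^ (k + 1))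
        (-(k + 1) * (1 - (x : ℂ)) ^ k) x := fun x => by
      have h1 : HasDerivAt (fun x : ℝ => 1 - (x : ℂ)) (-1) x := by
        simpa using (Complex.ofRealCLM.hasDerivAt (x := x)).const_sub 1
      refine (h1.pow (k + 1)).congr_deriv ?_
      push_cast
      ring
    have h := integral_fspline_mul_deriv hs0 j hd (by fun_prop)
    have ih := integral_fspline_mul_one_sub_pow hs0 k (j + 1)
    have e : ∀ x : ℝ, (fspline s (j + 1) x : ℂ) * (-(k + 1) * (1 - (x : ℂ)) ^ k) =
        -(k + 1) * ((fspline s (j + 1) x : ℂ) * (1 - (x : ℂ)) ^ k) := fun x => by ring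
    simp only [e] at h
    rw [intervalIntegral.integral_const_mul, ih] at h
    have e2 : j + 1 + k + 1 = j + (k + 1) + 1 := by ring
    rw [e2] at h
    simp only [Complex.ofReal_one, sub_self, zero_pow (Nat.succ_ne_zero k), mul_zero,
      zero_sub] at h
    rw [Nat.factorial_succ]
    push_cast
    linear_combination h

/-- The perfect spline and its derivatives vanish at the right endpoint. -/
lemma fspline_one_eq_zero {s k : ℕ} (hs : Even s) (hk : k + 1 < s) : fspline s (k + 1) 1 = 0 := by
  have hs0 : s ≠ 0 := by omega
  have h := integral_fspline_mul_one_sub_pow hs0 k 0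
  rw [integral_fspline_zero_mul_one_sub_pow hs hs0, altSum_one_add_cos_pow_eq_zero hk, zero_div,
    zero_add] at h
  have h' : ((k.factorial : ℝ) * fspline s (k + 1) 1 : ℂ) = 0 := by
    rw [Complex.ofReal_zero] at h; exact_mod_cast h.symm
  have h'' : (k.factorial : ℝ) * fspline s (k + 1) 1 = 0 := by exact_mod_cast h'
  exact (mul_eq_zero.1 h'').resolve_left (by exact_mod_cast k.factorial_ne_zero)

/-- The integral of the perfect spline. -/
lemma fspline_self_one {s : ℕ} (hs : Even s) (hs2 : 2 ≤ s) :
    ((s - 1).factorial : ℝ) * fspline s s 1 = 2 * (1 / 2) ^ (s - 1) := by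
  have hs0 : s ≠ 0 := by omega
  have h := integral_fspline_mul_one_sub_pow hs0 (s - 1) 0
  rw [integral_fspline_zero_mul_one_sub_pow hs hs0, zero_add, Nat.sub_add_cancel (by omega),
    altSum_one_add_cos_pow hs2] at h
  have hc : (((s - 1 : ℕ) : ℝ) + 1) = s := by
    rw [Nat.cast_sub (by omega)]; ring
  rw [hc] at h
  have h' : (1 / 2 : ℝ) ^ (s - 1) * (2 * s) / s = (s - 1).factorial * fspline s s 1 := by
    exact_mod_cast h
  rw [← h']
  have : (s : ℝ) ≠ 0 := by exact_mod_cast hs0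
  field_simp

lemma fspline_succ_sub (s k : ℕ) (a b : ℝ) :
    fspline s (k + 1) b - fspline s (k + 1) a = ∫ t in a..b, fspline s k t := by
  rw [fspline_succ, fspline_succ]
  exact intervalIntegral.integral_interval_sub_left (intervalIntegrable_fspline s k _ _)
    (intervalIntegrable_fspline s k _ _)

lemma fspline_one_eq_of_mem {s k : ℕ} (hs : Even s) (hk : k < s) {x : ℝ}
    (hx : x ∈ Set.Icc (knot s k) (knot s (k + 1))) :
    fspline s 1 x = fspline s 1 (knot s k) + (-1) ^ k * (x - knot s k) := by
  have h := fspline_succ_sub s 0 (knot s k) x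
  have h2 := integral_fspline_zero_mul_of_mem hs hk (fun _ => 1) hx
  simp only [mul_one, intervalIntegral.integral_const] at h2
  rw [intervalIntegral.integral_ofReal, ← h] at h2
  simp only [Complex.real_smul, mul_one, zero_add] at h2
  have h3 : fspline s 1 x - fspline s 1 (knot s k) = (-1) ^ k * (x - knot s k) := by
    exact_mod_cast h2
  linarith

lemma fspline_two_knot_succ {s k : ℕ} (hs : Even s) (hk : k < s) :
    fspline s 2 (knot s (k + 1)) = fspline s 2 (knot s k) +
      (knot s (k + 1) - knot s k) *
        (fspline s 1 (knot s k) + fspline s 1 (knot s (k + 1))) / 2 := by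
  have hle := (knot_lt_succ hk).le
  have h := fspline_succ_sub s 1 (knot s k) (knot s (k + 1))
  have h1 : ∫ t in knot s k..knot s (k + 1), fspline s 1 t =
      ∫ t in knot s k..knot s (k + 1), (fspline s 1 (knot s k) + (-1) ^ k * (t - knot s k)) :=
    intervalIntegral.integral_congr fun t ht => by
      rw [Set.uIcc_of_le hle] at ht
      exact fspline_one_eq_of_mem hs hk ht
  have h2 : ∫ t in knot s k..knot s (k + 1), (fspline s 1 (knot s k) + (-1) ^ k * (t - knot s k)) =
      fspline s 1 (knot s k) * (knot s (k + 1) - knot s k) +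
        (-1) ^ k * (knot s (k + 1) - knot s k) ^ 2 / 2 := by
    rw [intervalIntegral.integral_add (by simp)
      (Continuous.intervalIntegrable (by fun_prop) _ _),
      intervalIntegral.integral_const_mul, intervalIntegral.integral_const,
      intervalIntegral.integral_sub (by simp) (by simp), integral_id,
      intervalIntegral.integral_const]
    simp only [smul_eq_mul]
    ring
  have h3 := fspline_one_eq_of_mem hs hk ⟨hle, le_rfl⟩
  rw [h1, h2] at h
  rw [h3]
  linear_combination h

lemma fspline_one_knot {s : ℕ} (hs : Even s) : ∀ k ≤ s,
    Real.cos (π / s / 2) * fspline s 1 (knot s k) =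
      -((-1) ^ k * Real.sin (π / s / 2) * Real.sin (k * (π / s)))
  | 0, _ => by simp [knot_zero, fspline_succ]
  | k + 1, hk => by
    have ih := fspline_one_knot hs k (by omega)
    rw [fspline_one_eq_of_mem hs (k := k) (by omega) ⟨(knot_lt_succ (by omega)).le, le_rfl⟩,
      mul_add, ih, knot, knot]
    set α := π / (s : ℝ)
    have e1 : (k : ℝ) * α = (2 * k + 1) * (α / 2) - α / 2 := by ring
    have e2 : ((k + 1 : ℕ) : ℝ) * α = (2 * k + 1) * (α / 2) + α / 2 := by push_cast; ring
    rw [e1, e2, Real.cos_sub, Real.cos_add, Real.sin_sub, Real.sin_add]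
    ring

lemma fspline_two_knot {s : ℕ} (hs : Even s) : ∀ k ≤ s,
    2 * Real.cos (π / s / 2) * Real.cos (π / s) * fspline s 2 (knot s k) =
      -((-1) ^ k * Real.sin (π / s / 2) ^ 3 * Real.sin (2 * (k * (π / s))))
  | 0, _ => by simp [knot_zero, fspline_succ]
  | k + 1, hk => by
    have ih := fspline_two_knot hs k (by omega)
    have h1 := fspline_one_knot hs k (by omega)
    have h2 := fspline_one_knot hs (k + 1) hk
    rw [fspline_two_knot_succ hs (by omega)]
    have e : 2 * Real.cos (π / s / 2) * Real.cos (π / s) * (fspline s 2 (knot s k) +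
        (knot s (k + 1) - knot s k) *
          (fspline s 1 (knot s k) + fspline s 1 (knot s (k + 1))) / 2) =
        2 * Real.cos (π / s / 2) * Real.cos (π / s) * fspline s 2 (knot s k) +
        Real.cos (π / s) * (knot s (k + 1) - knot s k) *
        (Real.cos (π / s / 2) * fspline s 1 (knot s k) +
          Real.cos (π / s / 2) * fspline s 1 (knot s (k + 1))) := by ring
    rw [e, ih, h1, h2, knot, knot]
    set α := π / (s : ℝ)
    set β := (2 * (k : ℝ) + 1) * (α / 2)
    have e1 : (k : ℝ) * α = β - α / 2 := by ring
    have e2 : ((k + 1 : ℕ) : ℝ) * α = β + α / 2 := by push_cast; ring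
    have e3 : Real.cos α = Real.cos (α / 2) ^ 2 - Real.sin (α / 2) ^ 2 := by
      rw [← Real.cos_two_mul']; congr 1; ring
    rw [e1, e2, e3, Real.sin_two_mul, Real.sin_two_mul, Real.cos_sub, Real.cos_add, Real.sin_sub,
      Real.sin_add]
    rw [pow_succ (-1 : ℝ) k]
    ring

lemma exists_knot_interval {s : ℕ} : ∀ n ≤ s, 1 ≤ n → ∀ {x : ℝ}, -1 ≤ x → x ≤ knot s n →
    ∃ k < n, x ∈ Set.Icc (knot s k) (knot s (k + 1))
  | 0, _, h0, _, _, _ => absurd h0 (by omega)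
  | n + 1, hn, _, x, hx, hx' => by
    rcases le_total (knot s n) x with h | h
    · exact ⟨n, by omega, h, hx'⟩
    · rcases Nat.eq_zero_or_pos n with rfl | h0
      · exact ⟨0, by omega, by simpa [knot_zero] using hx, hx'⟩
      · obtain ⟨k, hk, hm⟩ := exists_knot_interval n (by omega) h0 hx h
        exact ⟨k, by omega, hm⟩

lemma half_angle_bounds {s : ℕ} (hs6 : 6 ≤ s) :
    0 < Real.sin (π / s / 2) ∧ Real.sin (π / s / 2) ≤ 1.5708 / s ∧
      0.9657 ≤ Real.cos (π / s / 2) ∧ 0.86 ≤ Real.cos (π / s) := by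
  have hs : (6 : ℝ) ≤ s := by exact_mod_cast hs6
  have hs0 : (0 : ℝ) < s := by linarith
  have hα0 : 0 < π / s := by positivity
  have hα : π / s ≤ 3.1416 / s := by gcongr; linarith [Real.pi_lt_d4]
  have hα1 : (3.1416 : ℝ) / s ≤ 0.5236 := by rw [div_le_iff₀ hs0]; linarith
  refine ⟨Real.sin_pos_of_pos_of_lt_pi (by positivity) (by linarith [Real.pi_gt_three]), ?_, ?_, ?_⟩
  · refine (Real.sin_le (by positivity)).trans ?_
    have : (1.5708 : ℝ) / s = 3.1416 / s / 2 := by ring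
    linarith
  · refine le_trans ?_ Real.one_sub_sq_div_two_le_cos
    nlinarith
  · refine le_trans ?_ Real.one_sub_sq_div_two_le_cos
    nlinarith

lemma abs_fspline_one_knot_le {s k : ℕ} (hs : Even s) (hs6 : 6 ≤ s) (hk : k ≤ s) :
    |fspline s 1 (knot s k)| ≤ 1.63 / s := by
  obtain ⟨h0, h1, h2, -⟩ := half_angle_bounds hs6
  have h := congrArg abs (fspline_one_knot hs k hk)
  rw [abs_mul, abs_neg, abs_mul, abs_mul, abs_pow, abs_neg, abs_one, one_pow, one_mul,
    abs_of_pos h0, abs_of_pos (show 0 < Real.cos (π / s / 2) by linarith)] at h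
  have h3 := Real.abs_sin_le_one (k * (π / s))
  have h4 : 0.9657 * |fspline s 1 (knot s k)| ≤ 1.5708 / s := by
    calc _ ≤ Real.cos (π / s / 2) * |fspline s 1 (knot s k)| := by gcongr
      _ = Real.sin (π / s / 2) * |Real.sin (k * (π / s))| := h
      _ ≤ Real.sin (π / s / 2) * 1 := by gcongr
      _ ≤ _ := by linarith
  have hs0 : (0 : ℝ) < s := by exact_mod_cast (by omega : 0 < s)
  rw [le_div_iff₀ hs0] at h4 ⊢
  nlinarith [abs_nonneg (fspline s 1 (knot s k))]

lemma abs_fspline_one_le {s : ℕ} (hs : Even s) (hs6 : 6 ≤ s) {x : ℝ} (hx : x ∈ Set.Icc (-1 : ℝ) 1) :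
    |fspline s 1 x| ≤ 1.63 / s := by
  obtain ⟨k, hk, hxk⟩ := exists_knot_interval s le_rfl (by omega) hx.1
    (by rw [knot_self (by omega)]; exact hx.2)
  have e1 := fspline_one_eq_of_mem hs hk hxk
  have e2 := fspline_one_eq_of_mem hs hk ⟨(knot_lt_succ hk).le, le_rfl⟩
  have b1 := abs_le.1 (abs_fspline_one_knot_le hs hs6 hk.le)
  have b2 := abs_le.1 (abs_fspline_one_knot_le hs hs6 (Nat.succ_le_of_lt hk))
  obtain ⟨hx1, hx2⟩ := hxk
  rw [abs_le]
  rcases neg_one_pow_eq_or ℝ k with h | h <;> rw [h] at e1 e2 <;> constructor <;> linarith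

lemma abs_fspline_two_knot_le {s k : ℕ} (hs : Even s) (hs6 : 6 ≤ s) (hk : k ≤ s) :
    |fspline s 2 (knot s k)| ≤ 0.4 / s ^ 2 := by
  obtain ⟨h0, h1, h2, h2'⟩ := half_angle_bounds hs6
  have hs' : (6 : ℝ) ≤ s := by exact_mod_cast hs6
  have hs0 : (0 : ℝ) < s := by linarith
  have h := congrArg abs (fspline_two_knot hs k hk)
  simp only [abs_mul, abs_neg, abs_pow, abs_one, one_pow, one_mul, abs_two, abs_of_pos h0,
    abs_of_pos (show 0 < Real.cos (π / s / 2) by linarith),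
    abs_of_pos (show 0 < Real.cos (π / s) by linarith)] at h
  have h3 := Real.abs_sin_le_one (2 * (k * (π / s)))
  have h4 : 2 * 0.9657 * 0.86 * |fspline s 2 (knot s k)| ≤ (1.5708 / s) ^ 3 := by
    calc _ ≤ 2 * Real.cos (π / s / 2) * Real.cos (π / s) * |fspline s 2 (knot s k)| := by gcongr
      _ = Real.sin (π / s / 2) ^ 3 * |Real.sin (2 * (k * (π / s)))| := h
      _ ≤ Real.sin (π / s / 2) ^ 3 * 1 := by gcongr
      _ ≤ _ := by rw [mul_one]; gcongr
  have h5 : (1.5708 / (s : ℝ)) ^ 3 ≤ 1.5708 ^ 3 / 6 / s ^ 2 := by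
    rw [div_pow, div_div, div_le_div_iff_of_pos_left (by norm_num) (by positivity) (by positivity)]
    nlinarith [pow_pos hs0 2]
  have h6 : (1.5708 : ℝ) ^ 3 / 6 / s ^ 2 ≤ 0.65 / s ^ 2 := by gcongr; norm_num
  have h7 : (0.65 : ℝ) / s ^ 2 ≤ 2 * 0.9657 * 0.86 * (0.4 / s ^ 2) := by
    rw [mul_div_assoc']; gcongr; norm_num
  nlinarith

lemma abs_fspline_two_le {s : ℕ} (hs : Even s) (hs6 : 6 ≤ s) {x : ℝ} (hx : x ∈ Set.Icc (-1 : ℝ) 1) :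
    |fspline s 2 x| ≤ 3 / s ^ 2 := by
  obtain ⟨k, hk, hxk⟩ := exists_knot_interval s le_rfl (by omega) hx.1
    (by rw [knot_self (by omega)]; exact hx.2)
  have hs0 : (0 : ℝ) < s := by exact_mod_cast (by omega : 0 < s)
  have hwidth : knot s (k + 1) - knot s k ≤ 3.1416 / s := by
    have h := Real.abs_cos_sub_cos_le (k * (π / s)) ((k + 1 : ℕ) * (π / s))
    have e : (k * (π / s) : ℝ) - (k + 1 : ℕ) * (π / s) = -(π / s) := by push_cast; ring
    rw [e, abs_neg, abs_of_pos (show 0 < π / s by positivity)] at h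
    have h2 : π / s ≤ 3.1416 / s := by gcongr; linarith [Real.pi_lt_d4]
    unfold knot
    linarith [le_abs_self (Real.cos (k * (π / s)) - Real.cos ((k + 1 : ℕ) * (π / s)))]
  obtain ⟨j, hj, hd⟩ : ∃ j ≤ s, |x - knot s j| ≤ 1.5708 / s := by
    have e : (1.5708 : ℝ) / s = 3.1416 / s / 2 := by ring
    rcases le_total (x - knot s k) (3.1416 / s / 2) with h | h
    · exact ⟨k, hk.le, by rw [e, abs_of_nonneg (by linarith [hxk.1])]; exact h⟩
    · exact ⟨k + 1, hk, by rw [e, abs_of_nonpos (by linarith [hxk.2])]; linarith⟩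
  have hinc : |fspline s 2 x - fspline s 2 (knot s j)| ≤ 1.63 / s * |x - knot s j| := by
    rw [fspline_succ_sub, ← Real.norm_eq_abs]
    refine intervalIntegral.norm_integral_le_of_norm_le_const fun t ht => ?_
    have ht' := Set.uIoc_subset_uIcc ht
    exact abs_fspline_one_le hs hs6 (Set.uIcc_subset_Icc (knot_mem s j) hx ht')
  have hk2 := abs_fspline_two_knot_le hs hs6 hj
  have h1 : (1.63 : ℝ) / s * |x - knot s j| ≤ 1.63 / s * (1.5708 / s) := by gcongr
  have h2 : (1.63 : ℝ) / s * (1.5708 / s) = 1.63 * 1.5708 / s ^ 2 := by field_simp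
  have h3 : (0.4 : ℝ) / s ^ 2 + 1.63 * 1.5708 / s ^ 2 ≤ 3 / s ^ 2 := by
    rw [← add_div]; gcongr; norm_num
  have h4 : |fspline s 2 x| ≤
      |fspline s 2 x - fspline s 2 (knot s j)| + |fspline s 2 (knot s j)| := by
    simpa using abs_add_le (fspline s 2 x - fspline s 2 (knot s j)) (fspline s 2 (knot s j))
  linarith

/-- The function `x ↦ x ^ l * exp (i ξ x)`. -/
noncomputable def monoExp (ξ : ℝ) (l : ℕ) (x : ℝ) : ℂ :=
  (x : ℂ) ^ l * Complex.exp (ξ * x * Complex.I)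

lemma continuous_monoExp (ξ : ℝ) (l : ℕ) : Continuous (monoExp ξ l) := by
  unfold monoExp; fun_prop

lemma norm_monoExp (ξ : ℝ) (l : ℕ) (x : ℝ) : ‖monoExp ξ l x‖ = |x| ^ l := by
  rw [monoExp, norm_mul, norm_pow, Complex.norm_real, ← Complex.ofReal_mul,
    Complex.norm_exp_ofReal_mul_I, mul_one, Real.norm_eq_abs]

lemma hasDerivAt_monoExp (ξ : ℝ) (l : ℕ) (x : ℝ) :
    HasDerivAt (monoExp ξ l) (l * monoExp ξ (l - 1) x + ξ * Complex.I * monoExp ξ l x) x := by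
  have h0 : HasDerivAt (fun x : ℝ => (x : ℂ)) 1 x := by
    simpa using (hasDerivAt_id x).ofReal_comp
  have h1 := h0.pow l
  have h2 : HasDerivAt (fun x : ℝ => Complex.exp (ξ * x * Complex.I))
      (Complex.exp (ξ * x * Complex.I) * (ξ * 1 * Complex.I)) x :=
    ((h0.const_mul (ξ : ℂ)).mul_const Complex.I).cexp
  refine (h1.mul h2).congr_deriv ?_
  simp only [monoExp, Pi.pow_apply]
  ring

/-- The Fourier moments of the spline chain, completed at index `0` by the jumps of its first
member. -/
noncomputable def splineMoment (s : ℕ) (ξ : ℝ) (l : ℕ) : ℕ → ℂ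
  | 0 => -∑ k ∈ Finset.range s, (-1) ^ k * (monoExp ξ l (knot s (k + 1)) - monoExp ξ l (knot s k))
  | k + 1 => ∫ x in (-1 : ℝ)..1, (fspline s k x : ℂ) * monoExp ξ l x

lemma integral_fspline_mul_deriv_monoExp (s : ℕ) (ξ : ℝ) (l k : ℕ) :
    ∫ x in (-1 : ℝ)..1, (fspline s k x : ℂ) *
        (l * monoExp ξ (l - 1) x + ξ * Complex.I * monoExp ξ l x) =
      l * splineMoment s ξ (l - 1) (k + 1) + ξ * Complex.I * splineMoment s ξ l (k + 1) := by
  have hi : ∀ l, IntervalIntegrable (fun x => (fspline s k x : ℂ) * monoExp ξ l x)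
      volume (-1) 1 := fun l =>
    IntervalIntegrable.mul_continuousOn ⟨(intervalIntegrable_fspline s k (-1) 1).1.ofReal,
      (intervalIntegrable_fspline s k (-1) 1).2.ofReal⟩ (continuous_monoExp ξ l).continuousOn
  have e : ∀ x : ℝ, (fspline s k x : ℂ) *
        (l * monoExp ξ (l - 1) x + ξ * Complex.I * monoExp ξ l x) =
      l * ((fspline s k x : ℂ) * monoExp ξ (l - 1) x) +
        ξ * Complex.I * ((fspline s k x : ℂ) * monoExp ξ l x) := fun x => by ring
  simp only [e]
  rw [intervalIntegral.integral_add ((hi _).const_mul _) ((hi _).const_mul _),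
    intervalIntegral.integral_const_mul, intervalIntegral.integral_const_mul]
  rfl

lemma splineMoment_rec {s : ℕ} (hs : Even s) (ξ : ℝ) (l : ℕ) {k : ℕ} (hk : k < s) :
    (-(ξ * Complex.I)) * splineMoment s ξ l (k + 1) =
      l * splineMoment s ξ (l - 1) (k + 1) + splineMoment s ξ l k := by
  have hs0 : s ≠ 0 := by omega
  have hc : Continuous fun x => (l : ℂ) * monoExp ξ (l - 1) x + ξ * Complex.I * monoExp ξ l x :=
    (continuous_const.mul (continuous_monoExp _ _)).add
      (continuous_const.mul (continuous_monoExp _ _))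
  have h := integral_fspline_mul_deriv_monoExp s ξ l k
  cases k with
  | zero =>
    rw [integral_fspline_zero_mul_deriv hs hs0 (hasDerivAt_monoExp ξ l) hc] at h
    have e : splineMoment s ξ l 0 = -∑ k ∈ Finset.range s,
      (-1) ^ k * (monoExp ξ l (knot s (k + 1)) - monoExp ξ l (knot s k)) := rfl
    rw [e]
    linear_combination h
  | succ k =>
    rw [integral_fspline_mul_deriv hs0 k (hasDerivAt_monoExp ξ l) hc,
      fspline_one_eq_zero hs hk] at h
    have e : splineMoment s ξ l (k + 1) =
      ∫ x in (-1 : ℝ)..1, (fspline s k x : ℂ) * monoExp ξ l x := rfl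
    rw [← e] at h
    push_cast at h
    linear_combination h

lemma pow_mul_splineMoment {s : ℕ} (hs : Even s) (ξ : ℝ) : ∀ p j : ℕ, p + j ≤ s →
    (-(ξ * Complex.I)) ^ p * splineMoment s ξ 0 (p + j) = splineMoment s ξ 0 j ∧
    (-(ξ * Complex.I)) ^ p * splineMoment s ξ 1 (p + j) =
      splineMoment s ξ 1 j + p * splineMoment s ξ 0 (j + 1) ∧
    (-(ξ * Complex.I)) ^ p * splineMoment s ξ 2 (p + j) =
      splineMoment s ξ 2 j + 2 * p * splineMoment s ξ 1 (j + 1) +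
        p * (p - 1) * splineMoment s ξ 0 (j + 2) ∧
    (-(ξ * Complex.I)) ^ p * splineMoment s ξ 3 (p + j) =
      splineMoment s ξ 3 j + 3 * p * splineMoment s ξ 2 (j + 1) +
        3 * p * (p - 1) * splineMoment s ξ 1 (j + 2) +
        p * (p - 1) * (p - 2) * splineMoment s ξ 0 (j + 3)
  | 0, j, _ => by simp
  | p + 1, j, h => by
    have hr := fun l => splineMoment_rec hs ξ l (k := p + j) (by omega)
    obtain ⟨a0, a1, a2, a3⟩ := pow_mul_splineMoment hs ξ p j (by omega)
    obtain ⟨b0, b1, b2, -⟩ := pow_mul_splineMoment hs ξ p (j + 1) (by omega)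
    have e : p + 1 + j = p + j + 1 := by ring
    have e' : p + (j + 1) = p + j + 1 := by ring
    rw [e'] at b0 b1 b2
    have r0 := hr 0
    have r1 := hr 1
    have r2 := hr 2
    have r3 := hr 3
    norm_num at r0 r1 r2 r3
    rw [e]
    set w := -((ξ : ℂ) * Complex.I) with hw
    have t1 : j + 1 + 1 = j + 2 := rfl
    have t2 : j + 1 + 2 = j + 3 := rfl
    rw [t1] at b1 b2
    rw [t2] at b2
    push_cast
    refine ⟨?_, ?_, ?_, ?_⟩ <;> rw [pow_succ, hw]
    · linear_combination w ^ p * r0 + a0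
    · linear_combination w ^ p * r1 + a1 + b0
    · linear_combination w ^ p * r2 + a2 + 2 * b1
    · linear_combination w ^ p * r3 + a3 + 3 * b2

lemma norm_splineMoment_zero_le {s : ℕ} (ξ : ℝ) (l : ℕ) : ‖splineMoment s ξ l 0‖ ≤ 2 * s := by
  have hm : ∀ k, ‖monoExp ξ l (knot s k)‖ ≤ 1 := fun k => by
    rw [norm_monoExp]
    refine pow_le_one₀ (abs_nonneg _) ?_
    rw [knot, abs_neg]
    exact Real.abs_cos_le_one _
  have e : splineMoment s ξ l 0 = -∑ k ∈ Finset.range s,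
      (-1) ^ k * (monoExp ξ l (knot s (k + 1)) - monoExp ξ l (knot s k)) := rfl
  rw [e, norm_neg]
  refine (norm_sum_le _ _).trans ?_
  calc _ ≤ ∑ k ∈ Finset.range s, (2 : ℝ) := by
        refine Finset.sum_le_sum fun k _ => ?_
        rw [norm_mul, norm_pow, norm_neg, norm_one, one_pow, one_mul]
        exact (norm_sub_le _ _).trans (by linarith [hm k, hm (k + 1)])
    _ = 2 * s := by simp [mul_comm]

lemma norm_splineMoment_succ_le {s k : ℕ} {C : ℝ}
    (hC : ∀ x ∈ Set.Icc (-1 : ℝ) 1, |fspline s k x| ≤ C) (ξ : ℝ) (l : ℕ) (φ : ℝ → ℝ)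
    (hφ : Continuous φ) (hl : ∀ x : ℝ, |x| ^ l ≤ φ x) :
    ‖splineMoment s ξ l (k + 1)‖ ≤ C * ∫ x in (-1 : ℝ)..1, φ x := by
  have e : splineMoment s ξ l (k + 1) =
      ∫ x in (-1 : ℝ)..1, (fspline s k x : ℂ) * monoExp ξ l x := rfl
  rw [e, ← intervalIntegral.integral_const_mul]
  have hC0 : 0 ≤ C := (abs_nonneg _).trans (hC 0 (by norm_num))
  refine intervalIntegral.norm_integral_le_of_norm_le (by norm_num) ?_
    ((continuous_const.mul hφ).intervalIntegrable _ _)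
  refine Filter.Eventually.of_forall fun x hx => ?_
  rw [norm_mul, norm_monoExp, Complex.norm_real, Real.norm_eq_abs]
  exact mul_le_mul (hC x ⟨hx.1.le, hx.2⟩) (hl x) (by positivity) hC0

lemma norm_splineMoment_succ_zero_le {s k : ℕ} {C : ℝ}
    (hC : ∀ x ∈ Set.Icc (-1 : ℝ) 1, |fspline s k x| ≤ C) (ξ : ℝ) :
    ‖splineMoment s ξ 0 (k + 1)‖ ≤ C * 2 := by
  refine (norm_splineMoment_succ_le hC ξ 0 (fun _ => 1) continuous_const (by simp)).trans ?_
  norm_num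

lemma norm_splineMoment_succ_one_le {s k : ℕ} {C : ℝ}
    (hC : ∀ x ∈ Set.Icc (-1 : ℝ) 1, |fspline s k x| ≤ C) (ξ : ℝ) :
    ‖splineMoment s ξ 1 (k + 1)‖ ≤ C * (4 / 3) := by
  refine (norm_splineMoment_succ_le hC ξ 1 (fun x => (1 + x ^ 2) / 2) (by fun_prop)
    fun x => ?_).trans_eq ?_
  · rw [pow_one]
    nlinarith [sq_nonneg (|x| - 1), sq_abs x]
  · rw [intervalIntegral.integral_div, intervalIntegral.integral_add
      (continuous_const.intervalIntegrable _ _) ((continuous_pow 2).intervalIntegrable _ _)]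
    norm_num

lemma norm_splineMoment_succ_two_le {s k : ℕ} {C : ℝ}
    (hC : ∀ x ∈ Set.Icc (-1 : ℝ) 1, |fspline s k x| ≤ C) (ξ : ℝ) :
    ‖splineMoment s ξ 2 (k + 1)‖ ≤ C * (2 / 3) := by
  refine (norm_splineMoment_succ_le hC ξ 2 (fun x => x ^ 2) (by fun_prop)
    fun x => (sq_abs x).le).trans_eq ?_
  norm_num

/-- Twice the factor in the decay bound of the `l`-th kernel derivative. -/
noncomputable def decayConst (s : ℕ) : ℕ → ℝ
  | 0 => 2 * s
  | 1 => 4 * s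
  | 2 => 8 * s + 2
  | _ => 18 * s - 4

lemma norm_splineMoment_self_le {s : ℕ} (hs : Even s) (hs6 : 6 ≤ s) {ξ : ℝ} (hξ : ξ ≠ 0) {l : ℕ}
    (hl : l ≤ 3) : ‖splineMoment s ξ l s‖ ≤ decayConst s l / |ξ| ^ s := by
  obtain ⟨a0, a1, a2, a3⟩ := pow_mul_splineMoment hs ξ s 0 le_rfl
  simp only [add_zero, zero_add] at a0 a1 a2 a3
  have hs' : (6 : ℝ) ≤ s := by exact_mod_cast hs6
  have hs0 : (0 : ℝ) < s := by linarith
  have hw : ∀ K : ℂ, ‖(-(ξ * Complex.I)) ^ s * K‖ = |ξ| ^ s * ‖K‖ := fun K => by simp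
  have c0 : ∀ x ∈ Set.Icc (-1 : ℝ) 1, |fspline s 0 x| ≤ 1 := fun x _ => abs_fspline_zero_le s x
  have c1 : ∀ x ∈ Set.Icc (-1 : ℝ) 1, |fspline s 1 x| ≤ 1.63 / s :=
    fun x hx => abs_fspline_one_le hs hs6 hx
  have c2 : ∀ x ∈ Set.Icc (-1 : ℝ) 1, |fspline s 2 x| ≤ 3 / s ^ 2 :=
    fun x hx => abs_fspline_two_le hs hs6 hx
  have n0 := fun l => norm_splineMoment_zero_le (s := s) ξ l
  have n01 : ‖splineMoment s ξ 0 1‖ ≤ _ := norm_splineMoment_succ_zero_le c0 ξ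
  have n02 : ‖splineMoment s ξ 0 2‖ ≤ _ := norm_splineMoment_succ_zero_le c1 ξ
  have n03 : ‖splineMoment s ξ 0 3‖ ≤ _ := norm_splineMoment_succ_zero_le c2 ξ
  have n11 : ‖splineMoment s ξ 1 1‖ ≤ _ := norm_splineMoment_succ_one_le c0 ξ
  have n12 : ‖splineMoment s ξ 1 2‖ ≤ _ := norm_splineMoment_succ_one_le c1 ξ
  have n21 : ‖splineMoment s ξ 2 1‖ ≤ _ := norm_splineMoment_succ_two_le c0 ξ
  have k1 : ‖(s : ℂ) - 1‖ = s - 1 := by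
    rw [← Complex.ofReal_natCast, ← Complex.ofReal_one, ← Complex.ofReal_sub, Complex.norm_real,
      Real.norm_of_nonneg (by linarith)]
  have k2 : ‖(s : ℂ) - 2‖ = s - 2 := by
    rw [← Complex.ofReal_natCast, ← Complex.ofReal_ofNat, ← Complex.ofReal_sub, Complex.norm_real,
      Real.norm_of_nonneg (by linarith)]
  rw [le_div_iff₀' (by positivity), ← hw]
  interval_cases l
  · rw [a0]; exact n0 0
  · rw [a1]
    refine (norm_add_le _ _).trans ?_
    rw [norm_mul, Complex.norm_natCast]
    have := mul_le_mul_of_nonneg_left n01 hs0.le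
    simp only [decayConst]
    linarith [n0 1]
  · rw [a2]
    refine (norm_add₃_le).trans ?_
    simp only [norm_mul, Complex.norm_natCast, Complex.norm_ofNat, k1]
    have t1 := mul_le_mul_of_nonneg_left n11 (by positivity : (0 : ℝ) ≤ 2 * s)
    have t2 := mul_le_mul_of_nonneg_left n02
      (mul_nonneg hs0.le (by linarith) : (0 : ℝ) ≤ s * (s - 1))
    have e2 : (s : ℝ) * (s - 1) * (1.63 / s * 2) = 3.26 * (s - 1) := by
      field_simp; ring
    simp only [decayConst]
    linarith [n0 2]
  · rw [a3]
    refine (norm_add₄_le).trans ?_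
    simp only [norm_mul, Complex.norm_natCast, Complex.norm_ofNat, k1, k2]
    have t1 := mul_le_mul_of_nonneg_left n21 (by positivity : (0 : ℝ) ≤ 3 * s)
    have t2 := mul_le_mul_of_nonneg_left n12
      (mul_nonneg (by positivity) (by linarith) : (0 : ℝ) ≤ 3 * s * (s - 1))
    have e2 : 3 * (s : ℝ) * (s - 1) * (1.63 / s * (4 / 3)) = 6.52 * (s - 1) := by
      field_simp; ring
    have t3 := mul_le_mul_of_nonneg_left n03
      (mul_nonneg (mul_nonneg hs0.le (by linarith)) (by linarith) :
        (0 : ℝ) ≤ s * (s - 1) * (s - 2))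
    have e3 : (s : ℝ) * (s - 1) * (s - 2) * (3 / s ^ 2 * 2) ≤ 6 * (s - 1) := by
      rw [show (s : ℝ) * (s - 1) * (s - 2) * (3 / s ^ 2 * 2) = 6 * (s - 1) * ((s - 2) / s) by
        field_simp; ring]
      refine mul_le_of_le_one_right (by linarith) ?_
      rw [div_le_one hs0]; linarith
    simp only [decayConst]
    linarith [n0 3]

lemma fspline_succ_neg_one (s k : ℕ) : fspline s (k + 1) (-1) = 0 := by
  rw [fspline_succ, intervalIntegral.integral_same]

/-- The perfect B-spline of order `s - 1`, extended by zero. -/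
noncomputable def splineExt (s : ℕ) (x : ℝ) : ℝ := fspline s (s - 1) (max (-1) (min 1 x))

lemma continuous_splineExt {s : ℕ} (hs2 : 2 ≤ s) : Continuous (splineExt s) := by
  obtain ⟨k, rfl⟩ := Nat.exists_eq_add_of_le' hs2
  exact (continuous_fspline_succ (k + 2) k).comp (by fun_prop)

lemma splineExt_of_mem {s : ℕ} {x : ℝ} (hx : x ∈ Set.Icc (-1 : ℝ) 1) :
    splineExt s x = fspline s (s - 1) x := by
  rw [splineExt, min_eq_right hx.2, max_eq_right hx.1]

lemma splineExt_of_one_le_abs {s : ℕ} (hs : Even s) (hs2 : 2 ≤ s) {x : ℝ} (hx : 1 ≤ |x|) :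
    splineExt s x = 0 := by
  obtain ⟨k, rfl⟩ := Nat.exists_eq_add_of_le' hs2
  rcases le_abs.1 hx with h | h
  · rw [splineExt, min_eq_left h, max_eq_right (by norm_num)]
    exact fspline_one_eq_zero hs (k := k) (by omega)
  · rw [splineExt, max_eq_left ((min_le_right _ _).trans (by linarith))]
    exact fspline_succ_neg_one _ _

lemma integral_splineExt_mul_monoExp {s : ℕ} (hs : Even s) (hs2 : 2 ≤ s) (ξ : ℝ) (l : ℕ) :
    ∫ x, (splineExt s x : ℂ) * monoExp ξ l x = splineMoment s ξ l s := by
  have e : splineMoment s ξ l s = splineMoment s ξ l (s - 1 + 1) := by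
    rw [Nat.sub_add_cancel (by omega)]
  have e' : splineMoment s ξ l (s - 1 + 1) =
    ∫ x in (-1 : ℝ)..1, (fspline s (s - 1) x : ℂ) * monoExp ξ l x := rfl
  rw [e, e', intervalIntegral.integral_of_le (by norm_num),
    ← setIntegral_eq_integral_of_forall_compl_eq_zero (s := Set.Ioc (-1 : ℝ) 1)]
  · refine setIntegral_congr_fun measurableSet_Ioc fun x hx => ?_
    simp only [splineExt_of_mem ⟨hx.1.le, hx.2⟩]
  · intro x hx
    rw [splineExt_of_one_le_abs hs hs2, Complex.ofReal_zero, zero_mul]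
    rw [Set.mem_Ioc, not_and_or, not_lt, not_le] at hx
    rcases hx with h | h
    · exact le_abs.2 (Or.inr (by linarith))
    · exact le_abs.2 (Or.inl h.le)

open FourierTransform in
lemma fourier_splineExt {s : ℕ} (hs : Even s) (hs2 : 2 ≤ s) {M : ℝ} (hM : 0 < M) (t : ℝ) (l : ℕ)
    (n : ℝ) : 𝓕 (fun x : ℝ => (splineExt s (x / M) : ℂ) * monoExp (M * t) l (x / M)) n =
      M * splineMoment s (M * (t - 2 * π * n)) l s := by
  rw [Real.fourier_real_eq_integral_exp_smul, ← integral_splineExt_mul_monoExp hs hs2]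
  have h := Measure.integral_comp_div
    (fun x => (splineExt s x : ℂ) * monoExp (M * (t - 2 * π * n)) l x) M
  rw [abs_of_pos hM, Complex.real_smul] at h
  rw [← h]
  congr 1 with x
  rw [smul_eq_mul, mul_left_comm]
  congr 1
  rw [monoExp, monoExp, mul_left_comm, ← Complex.exp_add]
  congr 2
  have hM' : (M : ℂ) ≠ 0 := by exact_mod_cast hM.ne'
  push_cast
  field_simp
  ring

lemma sum_gtilde_mul_monoExp {s N : ℕ} (hs : Even s) (hs2 : 2 ≤ s) (t : ℝ) (l : ℕ)
    (hsum : Summable fun n : ℤ => splineMoment s ((N + 1) * (t + 2 * π * n)) l s) :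
    ∑ k ∈ Finset.Icc (-(N : ℤ)) N, (gtilde s (k / (2 * ((N : ℝ) + 1))) : ℂ) *
        monoExp ((N + 1) * t) l (k / (N + 1)) =
      (N + 1) * ∑' n : ℤ, splineMoment s ((N + 1) * (t + 2 * π * n)) l s := by
  have hM : (0 : ℝ) < N + 1 := by positivity
  set H : ℝ → ℂ := fun x => (splineExt s (x / (N + 1)) : ℂ) *
    monoExp ((N + 1) * t) l (x / (N + 1)) with hH
  have hcont : Continuous H := by
    refine (Complex.continuous_ofReal.comp
      ((continuous_splineExt hs2).comp (continuous_id.div_const _))).mul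
      ((continuous_monoExp _ _).comp (continuous_id.div_const _))
  have hzero : ∀ x : ℝ, (N : ℝ) + 1 ≤ |x| → H x = 0 := fun x hx => by
    rw [hH]
    simp only
    rw [splineExt_of_one_le_abs hs hs2, Complex.ofReal_zero, zero_mul]
    rwa [abs_div, abs_of_pos hM, one_le_div hM]
  have hO : H =O[Filter.cocompact ℝ] fun x : ℝ => |x| ^ (-(2 : ℝ)) := by
    have : H =ᶠ[Filter.cocompact ℝ] fun _ => 0 := by
      filter_upwards [(isCompact_Icc (a := -((N : ℝ) + 1)) (b := N + 1)).compl_mem_cocompact]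
        with x hx
      refine hzero x (not_lt.1 fun h => hx ?_)
      exact ⟨(abs_lt.1 h).1.le, (abs_lt.1 h).2.le⟩
    exact this.trans_isBigO (Asymptotics.isBigO_zero _ _)
  have hF : ∀ n : ℤ, FourierTransform.fourier H (n : ℝ) =
      (N + 1) * splineMoment s ((N + 1) * (t + 2 * π * (-n : ℤ))) l s := fun n => by
    rw [hH, fourier_splineExt hs hs2 hM]
    push_cast
    congr 3
    ring
  have hneg : Summable fun n : ℤ => splineMoment s ((N + 1) * (t + 2 * π * (-n : ℤ))) l s :=
    (Equiv.neg ℤ).summable_iff.2 hsum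
  have key := Real.tsum_eq_tsum_fourier_of_rpow_decay_of_summable hcont one_lt_two hO
    (by simp only [hF]; exact hneg.mul_left _) 0
  simp only [hF, zero_add, fourier_eval_zero, QuotientAddGroup.mk_zero, mul_one] at key
  have hrefl : ∑' n : ℤ, splineMoment s ((N + 1) * (t + 2 * π * (-n : ℤ))) l s =
      ∑' n : ℤ, splineMoment s ((N + 1) * (t + 2 * π * n)) l s :=
    (Equiv.neg ℤ).tsum_eq (fun n : ℤ => splineMoment s ((N + 1) * (t + 2 * π * n)) l s)
  rw [tsum_mul_left, hrefl] at key
  rw [← key, tsum_eq_sum (s := Finset.Icc (-(N : ℤ)) N)]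
  · refine Finset.sum_congr rfl fun k hk => ?_
    rw [Finset.mem_Icc] at hk
    have h1 : (-(N : ℝ)) ≤ k := by exact_mod_cast hk.1
    have h2 : (k : ℝ) ≤ N := by exact_mod_cast hk.2
    rw [hH]
    simp only
    rw [splineExt_of_mem, gtilde]
    · rw [show 2 * ((k : ℝ) / (2 * ((N : ℝ) + 1))) = k / (N + 1) by field_simp]
    · constructor
      · rw [le_div_iff₀ hM]; linarith
      · rw [div_le_one hM]; linarith
  · intro k hk
    refine hzero _ ?_
    rw [Finset.mem_Icc, ← abs_le, not_le] at hk
    exact_mod_cast hk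

lemma norm_tsum_int_le {f : ℤ → ℂ} {b c : ℕ → ℝ} {B C : ℝ} (hb : HasSum b B) (hc : HasSum c C)
    (hfb : ∀ n : ℕ, ‖f n‖ ≤ b n) (hfc : ∀ n : ℕ, ‖f (-(n + 1))‖ ≤ c n) :
    Summable f ∧ ‖∑' n, f n‖ ≤ B + C := by
  have s1 : Summable fun n : ℕ => f n := Summable.of_norm_bounded hb.summable hfb
  have s2 : Summable fun n : ℕ => f (-(n + 1)) := Summable.of_norm_bounded hc.summable hfc
  have h := HasSum.of_nat_of_neg_add_one s1.hasSum s2.hasSum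
  refine ⟨h.summable, ?_⟩
  rw [h.tsum_eq]
  exact (norm_add_le _ _).trans
    (add_le_add (tsum_of_norm_bounded hb hfb) (tsum_of_norm_bounded hc hfc))

lemma hasSum_single_add_inv_sq :
    HasSum (fun n : ℕ => (if n = 0 then (1 : ℝ) else 0) + 1 / 324 * (1 / (n : ℝ) ^ 2))
      (1 + 1 / 324 * (π ^ 2 / 6)) :=
  (hasSum_ite_eq 0 (1 : ℝ)).add (hasSum_zeta_two.mul_left _)

lemma inv_odd_pow_le {s : ℕ} (hs6 : 6 ≤ s) (n : ℕ) :
    1 / (2 * (n : ℝ) + 1) ^ s ≤ (if n = 0 then (1 : ℝ) else 0) + 1 / 324 * (1 / (n : ℝ) ^ 2) := by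
  rcases Nat.eq_zero_or_pos n with rfl | hn
  · simp
  · have hn' : (1 : ℝ) ≤ n := by exact_mod_cast hn
    rw [if_neg hn.ne', zero_add, one_div_mul_one_div_rev]
    refine one_div_le_one_div_of_le (by positivity) ?_
    calc (n : ℝ) ^ 2 * 324 ≤ (2 * (n : ℝ) + 1) ^ 2 * 3 ^ 4 := by nlinarith
      _ ≤ (2 * (n : ℝ) + 1) ^ 2 * (2 * (n : ℝ) + 1) ^ 4 := by gcongr; linarith
      _ = (2 * (n : ℝ) + 1) ^ 6 := by ring
      _ ≤ _ := pow_le_pow_right₀ (by linarith) hs6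

lemma decayConst_nonneg {s : ℕ} (hs6 : 6 ≤ s) (l : ℕ) : 0 ≤ decayConst s l := by
  have hs' : (6 : ℝ) ≤ s := by exact_mod_cast hs6
  unfold decayConst
  split <;> linarith

lemma norm_tsum_splineMoment_le {s : ℕ} (hs : Even s) (hs6 : 6 ≤ s) {M t : ℝ} (hM : 0 < M)
    (ht : 0 < t) (htπ : t ≤ π) {l : ℕ} (hl : l ≤ 3) :
    (Summable fun n : ℤ => splineMoment s (M * (t + 2 * π * n)) l s) ∧
      ‖∑' n : ℤ, splineMoment s (M * (t + 2 * π * n)) l s‖ ≤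
        2.0104 * (decayConst s l / (M * t) ^ s) := by
  set D := decayConst s l / (M * t) ^ s with hD
  have hV := decayConst_nonneg hs6 l
  have hD0 : 0 ≤ D := by positivity
  have key : ∀ (n : ℕ) (u : ℝ), (2 * n + 1) * t ≤ |u| → ‖splineMoment s (M * u) l s‖ ≤
      D * ((if n = 0 then (1 : ℝ) else 0) + 1 / 324 * (1 / (n : ℝ) ^ 2)) := fun n u hu => by
    have hu0 : 0 < |u| := lt_of_lt_of_le (by positivity) hu
    have hne : M * u ≠ 0 := mul_ne_zero hM.ne' (abs_pos.1 hu0)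
    refine (norm_splineMoment_self_le hs hs6 hne hl).trans ?_
    refine le_trans ?_ (mul_le_mul_of_nonneg_left (inv_odd_pow_le hs6 n) hD0)
    rw [hD, div_mul_div_comm, mul_one, ← mul_pow]
    refine div_le_div_of_nonneg_left hV (by positivity) ?_
    refine pow_le_pow_left₀ (by positivity) ?_ s
    rw [abs_mul, abs_of_pos hM]
    nlinarith
  have hB := hasSum_single_add_inv_sq.mul_left D
  have ht1 : ∀ n : ℕ, (2 * (n : ℝ) + 1) * t ≤ |t + 2 * π * (n : ℤ)| := fun n => by
    refine le_trans ?_ (le_abs_self _)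
    have : (0 : ℝ) ≤ n := by positivity
    push_cast
    nlinarith
  have ht2 : ∀ n : ℕ, (2 * (n : ℝ) + 1) * t ≤ |t + 2 * π * (-(n + 1) : ℤ)| := fun n => by
    refine le_trans ?_ (neg_le_abs _)
    have : (0 : ℝ) ≤ n := by positivity
    push_cast
    nlinarith
  obtain ⟨h1, h2⟩ := norm_tsum_int_le (f := fun n : ℤ => splineMoment s (M * (t + 2 * π * n)) l s)
    hB hB (fun n => key n _ (ht1 n)) (fun n => key n _ (ht2 n))
  refine ⟨h1, h2.trans ?_⟩
  have : π ^ 2 ≤ 10 := by nlinarith [Real.pi_lt_d2, Real.pi_pos]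
  nlinarith

lemma splineMoment_zero_zero {s : ℕ} (hs2 : 2 ≤ s) :
    splineMoment s 0 0 s = (fspline s s 1 : ℂ) := by
  obtain ⟨k, rfl⟩ := Nat.exists_eq_add_of_le' hs2
  have e' : splineMoment (k + 2) 0 0 (k + 2) =
    ∫ x in (-1 : ℝ)..1, (fspline (k + 2) (k + 1) x : ℂ) * monoExp 0 0 x := rfl
  rw [e', fspline_succ]
  simp [monoExp, ← intervalIntegral.integral_ofReal]

lemma factorial_div_pow_le {s : ℕ} (hs6 : 6 ≤ s) {M : ℝ} (hM : 2 * (s : ℝ) ≤ M) :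
    (s.factorial : ℝ) / (π * M) ^ s ≤ 1 / 46656 := by
  have hs0 : (0 : ℝ) < s := by exact_mod_cast (by omega : 0 < s)
  have h1 : (s.factorial : ℝ) ≤ (s : ℝ) ^ s := by exact_mod_cast Nat.factorial_le_pow s
  have h2 : (6 * (s : ℝ)) ^ s ≤ (π * M) ^ s := by
    refine pow_le_pow_left₀ (by positivity) ?_ s
    nlinarith [Real.pi_gt_three]
  have h3 : (6 : ℝ) ^ 6 ≤ 6 ^ s := pow_le_pow_right₀ (by norm_num) hs6
  rw [div_le_div_iff₀ (lt_of_lt_of_le (by positivity) h2) (by norm_num), one_mul]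
  refine le_trans ?_ h2
  rw [mul_pow, mul_comm]
  exact mul_le_mul (by norm_num at h3 ⊢; exact h3) h1 (by positivity) (by positivity)

lemma gnorm_lower_bound {s N : ℕ} (hs : Even s) (hs6 : 6 ≤ s) (hN : 2 * s ≤ N) :
    0.999 * (((N : ℝ) + 1) * (2 * (1 / 2) ^ (s - 1) / (s - 1).factorial)) ≤ gnorm s N := by
  set M : ℝ := N + 1 with hMdef
  have hs0 : (0 : ℝ) < s := by exact_mod_cast (by omega : 0 < s)
  have hM : 0 < M := by positivity
  have hMs : 2 * (s : ℝ) ≤ M := by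
    have : (2 * s : ℝ) ≤ N := by exact_mod_cast hN
    linarith
  set f : ℤ → ℂ := fun n => splineMoment s (M * (0 + 2 * π * n)) 0 s with hf
  set g : ℤ → ℂ := fun n => if n = 0 then 0 else f n with hg
  set D : ℝ := 2 * s / (2 * π * M) ^ s with hD
  have key : ∀ n : ℤ, n ≠ 0 → ‖g n‖ ≤ D * (1 / (n : ℝ) ^ 2) := fun n hn => by
    have hnr : (n : ℝ) ≠ 0 := by exact_mod_cast hn
    have hn1 : (1 : ℝ) ≤ |(n : ℝ)| := by exact_mod_cast Int.one_le_abs hn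
    have hne : M * (0 + 2 * π * n) ≠ 0 := by
      have := Real.pi_pos
      rw [zero_add]; positivity
    rw [hg]
    simp only
    rw [if_neg hn]
    refine (norm_splineMoment_self_le hs hs6 hne (by norm_num)).trans ?_
    rw [hD, div_mul_div_comm, mul_one, decayConst, zero_add]
    refine div_le_div_of_nonneg_left (by positivity) (by positivity) ?_
    rw [show M * (2 * π * n) = (2 * π * M) * n by ring, abs_mul,
      abs_of_pos (a := 2 * π * M) (by positivity), mul_pow (2 * π * M), ← sq_abs (n : ℝ)]
    exact mul_le_mul_of_nonneg_left (pow_le_pow_right₀ hn1 (by omega)) (by positivity)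
  have hB := hasSum_zeta_two.mul_left D
  have hB' : HasSum (fun n : ℕ => D * (1 / ((n + 1 : ℕ) : ℝ) ^ 2)) (D * (π ^ 2 / 6)) := by
    have := (hasSum_nat_add_iff' 1).2 hB
    simpa using this
  have hg1 : ∀ n : ℕ, ‖g n‖ ≤ D * (1 / (n : ℝ) ^ 2) := fun n => by
    rcases Nat.eq_zero_or_pos n with rfl | hn
    · simp [hg]
    · simpa using key n (by exact_mod_cast hn.ne')
  have hg2 : ∀ n : ℕ, ‖g (-(n + 1))‖ ≤ D * (1 / ((n + 1 : ℕ) : ℝ) ^ 2) := fun n => by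
    refine (key (-(n + 1)) (by omega)).trans_eq ?_
    push_cast
    ring
  obtain ⟨h1, h2⟩ := norm_tsum_int_le hB hB' hg1 hg2
  have hfs : HasSum f (∑' n, g n + f 0) := by
    have := h1.hasSum.add (hasSum_ite_eq (0 : ℤ) (f 0))
    refine this.congr_fun ?_
    intro n
    by_cases hn : n = 0 <;> simp [hg, hn]
  have hP := sum_gtilde_mul_monoExp (N := N) hs (by omega) 0 0 hfs.summable
  rw [hfs.tsum_eq] at hP
  have hl : ∑ k ∈ Finset.Icc (-(N : ℤ)) N, (gtilde s (k / (2 * ((N : ℝ) + 1))) : ℂ) *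
        monoExp ((N + 1) * 0) 0 (k / (N + 1)) = (gnorm s N : ℂ) := by
    rw [gnorm, Complex.ofReal_sum]
    exact Finset.sum_congr rfl fun k _ => by simp [monoExp]
  have hf0 : f 0 = (fspline s s 1 : ℂ) := by
    rw [hf]
    simpa using splineMoment_zero_zero (by omega)
  rw [hl, hf0] at hP
  have hre := congrArg Complex.re hP
  rw [show ((N : ℂ) + 1) = ((M : ℝ) : ℂ) by rw [hMdef]; push_cast; rfl,
    Complex.ofReal_re, Complex.re_ofReal_mul, Complex.add_re, Complex.ofReal_re] at hre
  have hge : -(D * (π ^ 2 / 6) + D * (π ^ 2 / 6)) ≤ (∑' n, g n).re :=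
    (abs_le.1 ((Complex.abs_re_le_norm _).trans h2)).1
  have hself := fspline_self_one hs (by omega : 2 ≤ s)
  have hfac : (0 : ℝ) < (s - 1).factorial := by positivity
  have hI : fspline s s 1 = 2 * (1 / 2) ^ (s - 1) / (s - 1).factorial := by
    rw [← hself]; field_simp
  have hDI : D * (π ^ 2 / 6) + D * (π ^ 2 / 6) ≤ 0.001 * fspline s s 1 := by
    have hDe : D = (s.factorial / (π * M) ^ s) * fspline s s 1 / 2 := by
      rw [hI, hD, ← Nat.mul_factorial_pred (by omega : s ≠ 0), Nat.cast_mul,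
        show 2 * π * M = 2 * (π * M) by ring, mul_pow 2]
      obtain ⟨k, rfl⟩ := Nat.exists_eq_add_of_le' (by omega : 1 ≤ s)
      simp only [Nat.add_sub_cancel]
      rw [pow_succ 2 k, one_div, inv_pow]
      field_simp
    have hp : π ^ 2 ≤ 10 := by nlinarith [Real.pi_lt_d2, Real.pi_pos]
    have hI0 : 0 < fspline s s 1 := by rw [hI]; positivity
    have := factorial_div_pow_le hs6 hMs
    have hD1 : D ≤ 1 / 46656 * fspline s s 1 / 2 := by rw [hDe]; gcongr
    have hD0 : 0 ≤ D := by positivity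
    nlinarith
  rw [hre, ← hI]
  nlinarith

/-- The `l`-th derivative of the trigonometric kernel. -/
noncomputable def sigmaDeriv (s N l : ℕ) (t : ℝ) : ℝ :=
  ((1 / (gnorm s N : ℂ)) *
      ∑ k ∈ Finset.Icc (-(N : ℤ)) (N : ℤ),
        (gtilde s ((k : ℝ) / (2 * ((N : ℝ) + 1))) : ℂ) *
          ((k * Complex.I) ^ l * Complex.exp ((k : ℂ) * t * Complex.I))).re

lemma sigmaDeriv_zero (s N : ℕ) : sigmaDeriv s N 0 = sigmaT s N := by
  funext t
  simp [sigmaDeriv, sigmaT]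

lemma hasDerivAt_sigmaDeriv (s N l : ℕ) (t : ℝ) :
    HasDerivAt (sigmaDeriv s N l) (sigmaDeriv s N (l + 1) t) t := by
  have h0 : HasDerivAt (fun x : ℝ => (x : ℂ)) 1 t := by
    simpa using (hasDerivAt_id t).ofReal_comp
  have h1 : ∀ k : ℤ, HasDerivAt (fun x : ℝ => Complex.exp ((k : ℂ) * x * Complex.I))
      (Complex.exp ((k : ℂ) * t * Complex.I) * (k * 1 * Complex.I)) t := fun k =>
    ((h0.const_mul (k : ℂ)).mul_const Complex.I).cexp
  have h2 := (HasDerivAt.fun_sum (u := Finset.Icc (-(N : ℤ)) (N : ℤ)) fun k _ =>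
    ((h1 k).const_mul ((k * Complex.I) ^ l)).const_mul
      (gtilde s ((k : ℝ) / (2 * ((N : ℝ) + 1))) : ℂ)).const_mul (1 / (gnorm s N : ℂ))
  have h3 := (Complex.reCLM.hasFDerivAt (x := _)).comp_hasDerivAt t h2
  refine h3.congr_deriv ?_
  simp only [sigmaDeriv, Complex.reCLM_apply]
  congr 2
  refine Finset.sum_congr rfl fun k _ => ?_
  ring

lemma abs_sigmaDeriv_le {s N : ℕ} (hs : Even s) (hs6 : 6 ≤ s) (hN : 2 * s ≤ N) {t : ℝ}
    (ht : 0 < t) (htπ : t ≤ π) {l : ℕ} (hl : l ≤ 3) :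
    |sigmaDeriv s N l t| ≤ 0.51 * decayConst s l * (s - 1).factorial * 2 ^ s *
      (((N : ℝ) + 1) ^ l / (((N : ℝ) + 1) * t) ^ s) := by
  set M : ℝ := N + 1 with hMdef
  have hM : 0 < M := by positivity
  have hMC : ((M : ℝ) : ℂ) = (N : ℂ) + 1 := by rw [hMdef]; push_cast; rfl
  have hM0 : (N : ℂ) + 1 ≠ 0 := by rw [← hMC]; exact_mod_cast hM.ne'
  obtain ⟨hsum, hbound⟩ := norm_tsum_splineMoment_le hs hs6 hM ht htπ hl
  have hP := sum_gtilde_mul_monoExp (N := N) hs (by omega) t l hsum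
  have hg := gnorm_lower_bound hs hs6 hN
  have hV := decayConst_nonneg hs6 l
  have hsumeq : ∑ k ∈ Finset.Icc (-(N : ℤ)) (N : ℤ),
        (gtilde s ((k : ℝ) / (2 * ((N : ℝ) + 1))) : ℂ) *
          ((k * Complex.I) ^ l * Complex.exp ((k : ℂ) * t * Complex.I)) =
      (M * Complex.I) ^ l * ((N + 1) * ∑' n : ℤ, splineMoment s (M * (t + 2 * π * n)) l s) := by
    rw [← hP, Finset.mul_sum]
    refine Finset.sum_congr rfl fun k _ => ?_
    rw [mul_left_comm (((M : ℂ) * Complex.I) ^ l)]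
    congr 1
    rw [monoExp, ← mul_assoc, ← mul_pow, hMC]
    push_cast
    congr 2
    · field_simp
    · congr 1
      field_simp
  have hpow : (2 : ℝ) ^ s = 2 * 2 ^ (s - 1) := by
    rw [← pow_succ', Nat.sub_add_cancel (by omega)]
  have hfac : (0 : ℝ) < (s - 1).factorial := by positivity
  set G : ℝ := M * (2 * (1 / 2) ^ (s - 1) / (s - 1).factorial) with hG
  have hG0 : 0 < G := by positivity
  have hg0 : 0 < gnorm s N := by linarith
  rw [sigmaDeriv, hsumeq]
  refine (Complex.abs_re_le_norm _).trans ?_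
  rw [← hMC]
  simp only [norm_mul, norm_pow, norm_div, norm_one, Complex.norm_real, Complex.norm_I, mul_one,
    Real.norm_of_nonneg hM.le, Real.norm_of_nonneg hg0.le]
  calc 1 / gnorm s N * (M ^ l * (M * ‖∑' n : ℤ, splineMoment s (M * (t + 2 * π * n)) l s‖))
      ≤ 1 / (0.999 * G) * (M ^ l * (M * (2.0104 * (decayConst s l / (M * t) ^ s)))) := by
        gcongr
    _ = 2.0104 / (4 * 0.999) * (decayConst s l * (s - 1).factorial * 2 ^ s *
          (M ^ l / (M * t) ^ s)) := by
        rw [hG, hpow, one_div, one_div, inv_pow]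
        field_simp
        ring
    _ ≤ 0.51 * (decayConst s l * (s - 1).factorial * 2 ^ s * (M ^ l / (M * t) ^ s)) := by
        gcongr
        norm_num
    _ = _ := by ring

lemma IsSO3.mul_transpose {z : Mat3} (hz : IsSO3 z) : z * z.transpose = 1 :=
  mul_eq_one_comm.1 hz.1

lemma IsSO3.inv_eq {z : Mat3} (hz : IsSO3 z) : z⁻¹ = z.transpose :=
  Matrix.inv_eq_left_inv hz.1

lemma IsSO3.transpose {z : Mat3} (hz : IsSO3 z) : IsSO3 z.transpose :=
  ⟨by rw [Matrix.transpose_transpose]; exact hz.mul_transpose, by rw [Matrix.det_transpose, hz.2]⟩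

lemma IsSO3.mul {z w : Mat3} (hz : IsSO3 z) (hw : IsSO3 w) : IsSO3 (z * w) := by
  refine ⟨?_, by rw [Matrix.det_mul, hz.2, hw.2, one_mul]⟩
  rw [Matrix.transpose_mul, Matrix.mul_assoc, ← Matrix.mul_assoc z.transpose, hz.1,
    Matrix.one_mul, hw.1]

lemma IsSO3.adjugate_eq {z : Mat3} (hz : IsSO3 z) : z.adjugate = z.transpose := by
  have h := Matrix.mul_adjugate z
  rw [hz.2, one_smul] at h
  calc z.adjugate = z.transpose * z * z.adjugate := by rw [hz.1, Matrix.one_mul]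
    _ = z.transpose := by rw [Matrix.mul_assoc, h, Matrix.mul_one]

lemma IsSO3.cofactor {z : Mat3} (hz : IsSO3 z) :
    (z 0 0 = z 1 1 * z 2 2 - z 1 2 * z 2 1 ∧ z 0 1 = z 1 2 * z 2 0 - z 1 0 * z 2 2 ∧
      z 0 2 = z 1 0 * z 2 1 - z 1 1 * z 2 0) ∧
    (z 1 0 = z 0 2 * z 2 1 - z 0 1 * z 2 2 ∧ z 1 1 = z 0 0 * z 2 2 - z 0 2 * z 2 0 ∧
      z 1 2 = z 0 1 * z 2 0 - z 0 0 * z 2 1) ∧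
    (z 2 0 = z 0 1 * z 1 2 - z 0 2 * z 1 1 ∧ z 2 1 = z 0 2 * z 1 0 - z 0 0 * z 1 2 ∧
      z 2 2 = z 0 0 * z 1 1 - z 0 1 * z 1 0) := by
  have h := fun i j => congrFun (congrFun hz.adjugate_eq j) i
  simp only [Matrix.adjugate_fin_three, Matrix.transpose_apply] at h
  refine ⟨⟨?_, ?_, ?_⟩, ⟨?_, ?_, ?_⟩, ⟨?_, ?_, ?_⟩⟩ <;> rw [← h] <;> simp [sub_eq_neg_add]

lemma IsSO3.columns {z : Mat3} (hz : IsSO3 z) (i j : Fin 3) :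
    z 0 i * z 0 j + z 1 i * z 1 j + z 2 i * z 2 j = if i = j then 1 else 0 := by
  have h := congrFun (congrFun hz.1 i) j
  simpa [Matrix.mul_apply, Fin.sum_univ_three, Matrix.one_apply] using h

lemma IsSO3.axis_sq {z : Mat3} (hz : IsSO3 z) :
    (z 2 1 - z 1 2) ^ 2 + (z 0 2 - z 2 0) ^ 2 + (z 1 0 - z 0 1) ^ 2 =
      (3 - z.trace) * (1 + z.trace) := by
  obtain ⟨⟨h00, -, -⟩, ⟨-, h11, -⟩, ⟨-, -, h22⟩⟩ := hz.cofactor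
  have c0 := hz.columns 0 0
  have c1 := hz.columns 1 1
  have c2 := hz.columns 2 2
  simp only [if_true] at c0 c1 c2
  rw [Matrix.trace_fin_three]
  linear_combination c0 + c1 + c2 - 2 * h00 - 2 * h11 - 2 * h22

lemma IsSO3.trace_mem {z : Mat3} (hz : IsSO3 z) : (z.trace - 1) / 2 ∈ Set.Icc (-1 : ℝ) 1 := by
  have c0 := hz.columns 0 0
  have c1 := hz.columns 1 1
  have c2 := hz.columns 2 2
  simp only [if_true] at c0 c1 c2
  have h := hz.axis_sq
  have h3 : z.trace ≤ 3 := by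
    rw [Matrix.trace_fin_three]
    nlinarith [sq_nonneg (z 0 0 - 1), sq_nonneg (z 1 1 - 1), sq_nonneg (z 2 2 - 1),
      sq_nonneg (z 1 0), sq_nonneg (z 2 0), sq_nonneg (z 0 1), sq_nonneg (z 2 1),
      sq_nonneg (z 0 2), sq_nonneg (z 1 2)]
  have h1 : -1 ≤ z.trace := by
    by_contra hlt
    nlinarith [sq_nonneg (z 2 1 - z 1 2), sq_nonneg (z 0 2 - z 2 0), sq_nonneg (z 1 0 - z 0 1)]
  constructor <;> linarith

lemma IsSO3.cos_rotAngle {z : Mat3} (hz : IsSO3 z) :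
    Real.cos (rotAngle z) = (z.trace - 1) / 2 :=
  Real.cos_arccos hz.trace_mem.1 hz.trace_mem.2

lemma transpose_Lgen (i : Fin 3) : (Lgen i).transpose = -Lgen i := by
  fin_cases i <;> ext a b <;> fin_cases a <;> fin_cases b <;> simp [Lgen]

lemma transpose_exp_smul_Lgen (i : Fin 3) (t : ℝ) :
    (NormedSpace.exp (t • Lgen i)).transpose = NormedSpace.exp ((-t) • Lgen i) := by
  rw [← Matrix.exp_transpose, Matrix.transpose_smul, transpose_Lgen, smul_neg, neg_smul]

lemma isSO3_exp_smul_Lgen (i : Fin 3) (t : ℝ) : IsSO3 (NormedSpace.exp (t • Lgen i)) := by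
  have horth : ∀ t : ℝ, (NormedSpace.exp (t • Lgen i)).transpose *
      NormedSpace.exp (t • Lgen i) = 1 := fun t => by
    rw [transpose_exp_smul_Lgen, neg_smul, Matrix.exp_neg]
    exact Matrix.nonsing_inv_mul _ ((Matrix.isUnit_iff_isUnit_det _).1 (Matrix.isUnit_exp _))
  refine ⟨horth t, ?_⟩
  have hsq : (NormedSpace.exp (t • Lgen i)).det =
      (NormedSpace.exp ((t / 2) • Lgen i)).det ^ 2 := by
    rw [← Matrix.det_pow, ← Matrix.exp_nsmul]
    congr 2
    rw [← Nat.cast_smul_eq_nsmul ℝ, smul_smul]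
    congr 1
    push_cast
    ring
  have h := congrArg Matrix.det (horth (t / 2))
  rw [Matrix.det_mul, Matrix.det_transpose, Matrix.det_one] at h
  rw [hsq, sq, h]

/-- Half the trace of `yᵀ x A`. -/
noncomputable def halfTrace (A x y : Mat3) : ℝ := (y.transpose * x * A).trace / 2

section ExpDerivative

open scoped Matrix.Norms.Operator

lemma hasDerivAt_trace_mul_exp_mul (i : Fin 3) (A B : Mat3) :
    HasDerivAt (fun t : ℝ => (A * NormedSpace.exp (t • Lgen i) * B).trace)
      (A * Lgen i * B).trace 0 := by
  have h1 := hasDerivAt_exp_smul_const (𝕂 := ℝ) (Lgen i) 0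
  rw [zero_smul, NormedSpace.exp_zero, one_mul] at h1
  have h2 := (h1.const_mul A).mul_const B
  exact ((Matrix.traceLinearMap (Fin 3) ℝ ℝ).toContinuousLinearMap.hasFDerivAt).comp_hasDerivAt
    (0 : ℝ) h2

end ExpDerivative

lemma hasDerivAt_halfTrace_left (i : Fin 3) (A x y : Mat3) :
    HasDerivAt (fun t : ℝ => halfTrace A (x * NormedSpace.exp (t • Lgen i)) y)
      (halfTrace (Lgen i * A) x y) 0 := by
  have h := (hasDerivAt_trace_mul_exp_mul i (y.transpose * x) A).div_const 2
  simpa only [halfTrace, Matrix.mul_assoc] using h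

lemma hasDerivAt_halfTrace_right (i : Fin 3) (A x y : Mat3) :
    HasDerivAt (fun t : ℝ => halfTrace A x (y * NormedSpace.exp (t • Lgen i)))
      (-halfTrace (A * Lgen i) x y) 0 := by
  have h := (hasDerivAt_trace_mul_exp_mul i ((x * A).transpose * y) 1).div_const 2
  have e : ∀ B : Mat3, ((x * A).transpose * y * B * 1).trace =
      (B.transpose * y.transpose * x * A).trace := fun B => by
    rw [← Matrix.trace_transpose]
    simp only [Matrix.transpose_mul, Matrix.transpose_transpose, Matrix.transpose_one,
      Matrix.one_mul, Matrix.mul_assoc]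
  simp only [e] at h
  simp only [halfTrace, Matrix.transpose_mul]
  refine h.congr_deriv ?_
  rw [transpose_Lgen, Matrix.mul_assoc, Matrix.mul_assoc, Matrix.trace_mul_comm,
    Matrix.mul_neg, Matrix.trace_neg, neg_div]
  simp only [Matrix.mul_assoc]

/-- The algebraic polynomial `F` with `F (cos t)` the trigonometric kernel. -/
noncomputable def kernelPoly (s N : ℕ) : Polynomial ℝ :=
  ∑ k ∈ Finset.Icc (-(N : ℤ)) (N : ℤ),
    Polynomial.C (1 / gnorm s N * gtilde s ((k : ℝ) / (2 * ((N : ℝ) + 1)))) *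
      Polynomial.Chebyshev.T ℝ k

lemma sigmaT_eq_eval_cos (s N : ℕ) (t : ℝ) :
    sigmaT s N t = (kernelPoly s N).eval (Real.cos t) := by
  rw [sigmaT, kernelPoly, Polynomial.eval_finsetSum, Finset.mul_sum, Complex.re_sum]
  refine Finset.sum_congr rfl fun k _ => ?_
  rw [Polynomial.eval_mul, Polynomial.eval_C, Polynomial.Chebyshev.T_real_cos, ← mul_assoc,
    ← Complex.ofReal_one, ← Complex.ofReal_div, ← Complex.ofReal_mul, Complex.re_ofReal_mul,
    ← Complex.ofReal_intCast, ← Complex.ofReal_mul, Complex.exp_ofReal_mul_I_re]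

lemma sigmaK_eq_eval {s N : ℕ} {x y : Mat3} (hx : IsSO3 x) (hy : IsSO3 y) :
    sigmaK s N x y = (kernelPoly s N).eval (halfTrace 1 x y - 1 / 2) := by
  rw [sigmaK, sigmaT_eq_eval_cos, hy.inv_eq, (hy.transpose.mul hx).cos_rotAngle, halfTrace,
    Matrix.mul_one]
  congr 1
  ring

lemma Xx_congr {f g : Mat3 → Mat3 → ℝ} (h : ∀ x y, IsSO3 x → IsSO3 y → f x y = g x y)
    (i : Fin 3) {x y : Mat3} (hx : IsSO3 x) (hy : IsSO3 y) : Xx i f x y = Xx i g x y := by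
  unfold Xx
  congr 1 with t
  exact h _ _ (hx.mul (isSO3_exp_smul_Lgen i t)) hy

lemma Xy_congr {f g : Mat3 → Mat3 → ℝ} (h : ∀ x y, IsSO3 x → IsSO3 y → f x y = g x y)
    (i : Fin 3) {x y : Mat3} (hx : IsSO3 x) (hy : IsSO3 y) : Xy i f x y = Xy i g x y := by
  unfold Xy
  congr 1 with t
  exact h _ _ hx (hy.mul (isSO3_exp_smul_Lgen i t))

lemma mul_exp_zero (x : Mat3) (i : Fin 3) : x * NormedSpace.exp ((0 : ℝ) • Lgen i) = x := by
  rw [zero_smul, NormedSpace.exp_zero, Matrix.mul_one]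

lemma hasDerivAt_eval_halfTrace_left (P : Polynomial ℝ) (i : Fin 3) (x y : Mat3) :
    HasDerivAt (fun t : ℝ =>
        P.eval (halfTrace 1 (x * NormedSpace.exp (t • Lgen i)) y - 1 / 2))
      (P.derivative.eval (halfTrace 1 x y - 1 / 2) * halfTrace (Lgen i) x y) 0 := by
  have h := (hasDerivAt_halfTrace_left i 1 x y).sub_const (1 / 2)
  have h' := HasDerivAt.comp (0 : ℝ)
    (P.hasDerivAt (halfTrace 1 (x * NormedSpace.exp ((0 : ℝ) • Lgen i)) y - 1 / 2)) h
  refine h'.congr_deriv ?_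
  rw [mul_exp_zero, Matrix.mul_one]

lemma hasDerivAt_eval_halfTrace_right (P : Polynomial ℝ) (i : Fin 3) (x y : Mat3) :
    HasDerivAt (fun t : ℝ =>
        P.eval (halfTrace 1 x (y * NormedSpace.exp (t • Lgen i)) - 1 / 2))
      (-(P.derivative.eval (halfTrace 1 x y - 1 / 2) * halfTrace (Lgen i) x y)) 0 := by
  have h := (hasDerivAt_halfTrace_right i 1 x y).sub_const (1 / 2)
  have h' := HasDerivAt.comp (0 : ℝ)
    (P.hasDerivAt (halfTrace 1 x (y * NormedSpace.exp ((0 : ℝ) • Lgen i)) - 1 / 2)) h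
  refine h'.congr_deriv ?_
  rw [mul_exp_zero, Matrix.one_mul, mul_neg]

section Derivatives

variable {s N : ℕ} {x y : Mat3}

/-- The `m`-th derivative of the kernel polynomial at the cosine of the rotation angle. -/
noncomputable def kernelPolyDeriv (s N m : ℕ) (x y : Mat3) : ℝ :=
  (Polynomial.derivative^[m] (kernelPoly s N)).eval (halfTrace 1 x y - 1 / 2)

lemma hasDerivAt_kernelPolyDeriv (s N m : ℕ) (i : Fin 3) (x y : Mat3) :
    HasDerivAt (fun t : ℝ => kernelPolyDeriv s N m (x * NormedSpace.exp (t • Lgen i)) y)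
      (kernelPolyDeriv s N (m + 1) x y * halfTrace (Lgen i) x y) 0 := by
  have h := hasDerivAt_eval_halfTrace_left (Polynomial.derivative^[m] (kernelPoly s N)) i x y
  rwa [← Function.iterate_succ_apply' Polynomial.derivative] at h

lemma Xx_sigmaK (i : Fin 3) (hx : IsSO3 x) (hy : IsSO3 y) :
    Xx i (sigmaK s N) x y = kernelPolyDeriv s N 1 x y * halfTrace (Lgen i) x y := by
  rw [Xx_congr (fun x y hx hy => sigmaK_eq_eval hx hy) i hx hy]
  exact (hasDerivAt_kernelPolyDeriv s N 0 i x y).deriv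

lemma Xy_sigmaK (k : Fin 3) (hx : IsSO3 x) (hy : IsSO3 y) :
    Xy k (sigmaK s N) x y = -(kernelPolyDeriv s N 1 x y * halfTrace (Lgen k) x y) := by
  rw [Xy_congr (fun x y hx hy => sigmaK_eq_eval hx hy) k hx hy]
  exact (hasDerivAt_eval_halfTrace_right (kernelPoly s N) k x y).deriv

lemma hasDerivAt_kernelPolyDeriv_mul (i j : Fin 3) (x y : Mat3) :
    HasDerivAt (fun t : ℝ => kernelPolyDeriv s N 1 (x * NormedSpace.exp (t • Lgen j)) y *
        halfTrace (Lgen i) (x * NormedSpace.exp (t • Lgen j)) y)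
      (kernelPolyDeriv s N 2 x y * halfTrace (Lgen j) x y * halfTrace (Lgen i) x y +
        kernelPolyDeriv s N 1 x y * halfTrace (Lgen j * Lgen i) x y) 0 := by
  have h := (hasDerivAt_kernelPolyDeriv s N 1 j x y).fun_mul
    (hasDerivAt_halfTrace_left j (Lgen i) x y)
  rwa [mul_exp_zero] at h

lemma Xx_Xx_sigmaK (i j : Fin 3) (hx : IsSO3 x) (hy : IsSO3 y) :
    Xx j (Xx i (sigmaK s N)) x y =
      kernelPolyDeriv s N 2 x y * halfTrace (Lgen j) x y * halfTrace (Lgen i) x y +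
        kernelPolyDeriv s N 1 x y * halfTrace (Lgen j * Lgen i) x y := by
  rw [Xx_congr (fun x y hx hy => Xx_sigmaK i hx hy) j hx hy]
  exact (hasDerivAt_kernelPolyDeriv_mul i j x y).deriv

lemma Xx_Xy_sigmaK (i k : Fin 3) (hx : IsSO3 x) (hy : IsSO3 y) :
    Xx i (Xy k (sigmaK s N)) x y =
      -(kernelPolyDeriv s N 2 x y * halfTrace (Lgen i) x y * halfTrace (Lgen k) x y +
        kernelPolyDeriv s N 1 x y * halfTrace (Lgen i * Lgen k) x y) := by
  rw [Xx_congr (fun x y hx hy => Xy_sigmaK k hx hy) i hx hy]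
  exact (hasDerivAt_kernelPolyDeriv_mul k i x y).fun_neg.deriv

lemma Xx_Xx_Xy_sigmaK (i j k : Fin 3) (hx : IsSO3 x) (hy : IsSO3 y) :
    Xx j (Xx i (Xy k (sigmaK s N))) x y =
      -(kernelPolyDeriv s N 3 x y * halfTrace (Lgen j) x y * halfTrace (Lgen i) x y *
          halfTrace (Lgen k) x y +
        kernelPolyDeriv s N 2 x y * (halfTrace (Lgen j * Lgen i) x y * halfTrace (Lgen k) x y +
          halfTrace (Lgen i) x y * halfTrace (Lgen j * Lgen k) x y +
          halfTrace (Lgen j) x y * halfTrace (Lgen i * Lgen k) x y) +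
        kernelPolyDeriv s N 1 x y * halfTrace (Lgen j * (Lgen i * Lgen k)) x y) := by
  rw [Xx_congr (fun x y hx hy => Xx_Xy_sigmaK i k hx hy) j hx hy]
  have h := ((((hasDerivAt_kernelPolyDeriv s N 2 j x y).fun_mul
    (hasDerivAt_halfTrace_left j (Lgen i) x y)).fun_mul
      (hasDerivAt_halfTrace_left j (Lgen k) x y)).fun_add
    ((hasDerivAt_kernelPolyDeriv s N 1 j x y).fun_mul
      (hasDerivAt_halfTrace_left j (Lgen i * Lgen k) x y))).fun_neg
  refine h.deriv.trans ?_
  simp only [mul_exp_zero]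
  ring

end Derivatives

/-- The cross product matrix of a vector. -/
noncomputable def crossMat (ν : Fin 3 → ℝ) : Mat3 :=
  ν 0 • Lgen 0 + ν 1 • Lgen 1 + ν 2 • Lgen 2

lemma crossMat_eq (ν : Fin 3 → ℝ) :
    crossMat ν = !![0, -ν 2, ν 1; ν 2, 0, -ν 0; -ν 1, ν 0, 0] := by
  ext a b
  fin_cases a <;> fin_cases b <;> simp [crossMat, Lgen]

/-- The rotation matrix with axis `ν`, cosine `C` and sine `S`. -/
noncomputable def axisRotation (C S : ℝ) (ν : Fin 3 → ℝ) : Mat3 :=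
  C • 1 + (1 - C) • Matrix.vecMulVec ν ν + S • crossMat ν

lemma axisRotation_apply (C S : ℝ) (ν : Fin 3 → ℝ) (i j : Fin 3) :
    axisRotation C S ν i j =
      C * (if i = j then 1 else 0) + (1 - C) * (ν i * ν j) + S * crossMat ν i j := by
  simp [axisRotation, Matrix.one_apply, Matrix.vecMulVec_apply]

lemma IsSO3.exists_axis_of_sin_pos {z : Mat3} (hz : IsSO3 z) {S : ℝ} (hS : 0 < S)
    (hSt : 4 * S ^ 2 = (3 - z.trace) * (1 + z.trace)) :
    ∃ ν : Fin 3 → ℝ, ν 0 ^ 2 + ν 1 ^ 2 + ν 2 ^ 2 = 1 ∧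
      z = axisRotation ((z.trace - 1) / 2) S ν := by
  have hax := hz.axis_sq
  obtain ⟨⟨h00, h01, h02⟩, ⟨h10, h11, h12⟩, ⟨h20, h21, h22⟩⟩ := hz.cofactor
  have c00 := hz.columns 0 0
  have c01 := hz.columns 0 1
  have c02 := hz.columns 0 2
  have c11 := hz.columns 1 1
  have c12 := hz.columns 1 2
  have c22 := hz.columns 2 2
  have r00 := hz.transpose.columns 0 0
  have r01 := hz.transpose.columns 0 1
  have r02 := hz.transpose.columns 0 2
  have r11 := hz.transpose.columns 1 1
  have r12 := hz.transpose.columns 1 2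
  have r22 := hz.transpose.columns 2 2
  rw [if_pos rfl] at c00 c11 c22 r00 r11 r22
  rw [if_neg (by decide)] at c01 c02 c12 r01 r02 r12
  simp only [Matrix.transpose_apply] at r00 r01 r02 r11 r12 r22
  have htr := Matrix.trace_fin_three z
  set t := z.trace with ht
  have ht3 : 3 - t ≠ 0 := by
    intro h
    rw [h, zero_mul] at hSt
    linarith [pow_pos hS 2]
  have ht1 : 1 + t ≠ 0 := by
    intro h
    rw [h, mul_zero] at hSt
    linarith [pow_pos hS 2]
  have key : ∀ a Q : ℝ, a = (1 + t) * Q → (1 - (t - 1) / 2) * (a / (4 * S ^ 2)) = Q / 2 := by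
    rintro a Q rfl
    rw [hSt]
    field_simp
    ring
  have e : ∀ a b : ℝ, a / (2 * S) * (b / (2 * S)) = a * b / (4 * S ^ 2) := fun a b => by
    field_simp
    ring
  have e2 : ∀ a : ℝ, S * (a / (2 * S)) = a / 2 := fun a => by field_simp
  refine ⟨![(z 2 1 - z 1 2) / (2 * S), (z 0 2 - z 2 0) / (2 * S), (z 1 0 - z 0 1) / (2 * S)],
    ?_, ?_⟩
  · simp only [Matrix.cons_val_zero, Matrix.cons_val_one, Matrix.cons_val, div_pow, ← add_div]
    rw [hax, ← hSt]
    field_simp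
    norm_num
  · have q00 := key ((z 2 1 - z 1 2) * (z 2 1 - z 1 2)) (2 * z 0 0 + 1 - t) (by
      rw [htr]; linear_combination c11 + c22 - r00 - 2 * h00)
    have q11 := key ((z 0 2 - z 2 0) * (z 0 2 - z 2 0)) (2 * z 1 1 + 1 - t) (by
      rw [htr]; linear_combination c00 + c22 - r11 - 2 * h11)
    have q22 := key ((z 1 0 - z 0 1) * (z 1 0 - z 0 1)) (2 * z 2 2 + 1 - t) (by
      rw [htr]; linear_combination c00 + c11 - r22 - 2 * h22)
    have q01 := key ((z 2 1 - z 1 2) * (z 0 2 - z 2 0)) (z 0 1 + z 1 0) (by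
      rw [htr]; linear_combination -c01 - r01 - h01 - h10)
    have q02 := key ((z 2 1 - z 1 2) * (z 1 0 - z 0 1)) (z 0 2 + z 2 0) (by
      rw [htr]; linear_combination -c02 - r02 - h02 - h20)
    have q12 := key ((z 0 2 - z 2 0) * (z 1 0 - z 0 1)) (z 1 2 + z 2 1) (by
      rw [htr]; linear_combination -c12 - r12 - h12 - h21)
    have q10 := key ((z 0 2 - z 2 0) * (z 2 1 - z 1 2)) (z 0 1 + z 1 0) (by
      rw [htr]; linear_combination -c01 - r01 - h01 - h10)
    have q20 := key ((z 1 0 - z 0 1) * (z 2 1 - z 1 2)) (z 0 2 + z 2 0) (by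
      rw [htr]; linear_combination -c02 - r02 - h02 - h20)
    have q21 := key ((z 1 0 - z 0 1) * (z 0 2 - z 2 0)) (z 1 2 + z 2 1) (by
      rw [htr]; linear_combination -c12 - r12 - h12 - h21)
    ext i j
    rw [axisRotation_apply, crossMat_eq]
    fin_cases i <;> fin_cases j <;>
      simp [e, e2, q00, q01, q02, q10, q11, q12, q20, q21, q22] <;> ring

lemma exists_eq_mul_of_minors {P : Mat3} (htr : P.trace = 1)
    (hP : ∀ i j k, P i i * P j k = P i j * P i k) :
    ∃ ν : Fin 3 → ℝ, ∀ j k, P j k = ν j * ν k := by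
  have hex : ∃ i, 0 < P i i := by
    by_contra! h
    have := Matrix.trace_fin_three P
    linarith [h 0, h 1, h 2]
  obtain ⟨i, hi⟩ := hex
  refine ⟨fun j => P i j / √(P i i), fun j k => ?_⟩
  rw [div_mul_div_comm, Real.mul_self_sqrt hi.le, ← hP i j k]
  field_simp

lemma IsSO3.exists_axis_of_trace_eq {z : Mat3} (hz : IsSO3 z) (ht : z.trace = -1) :
    ∃ ν : Fin 3 → ℝ, ν 0 ^ 2 + ν 1 ^ 2 + ν 2 ^ 2 = 1 ∧ z = axisRotation (-1) 0 ν := by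
  have hax := hz.axis_sq
  rw [ht] at hax
  have s12 : z 2 1 = z 1 2 := by
    nlinarith [sq_nonneg (z 2 1 - z 1 2), sq_nonneg (z 0 2 - z 2 0), sq_nonneg (z 1 0 - z 0 1)]
  have s02 : z 2 0 = z 0 2 := by
    nlinarith [sq_nonneg (z 2 1 - z 1 2), sq_nonneg (z 0 2 - z 2 0), sq_nonneg (z 1 0 - z 0 1)]
  have s01 : z 1 0 = z 0 1 := by
    nlinarith [sq_nonneg (z 2 1 - z 1 2), sq_nonneg (z 0 2 - z 2 0), sq_nonneg (z 1 0 - z 0 1)]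
  obtain ⟨⟨h00, h01, h02⟩, ⟨-, h11, h12⟩, ⟨-, -, h22⟩⟩ := hz.cofactor
  have htr := Matrix.trace_fin_three z
  rw [ht] at htr
  simp only [s12, s02, s01] at h00 h01 h02 h11 h12 h22
  obtain ⟨ν, hν⟩ := exists_eq_mul_of_minors (P := (1 / 2 : ℝ) • (z + 1))
    (by rw [Matrix.trace_smul, Matrix.trace_add, ht, Matrix.trace_one]; norm_num)
    (by
      intro i j k
      fin_cases i <;> fin_cases j <;> fin_cases k <;> simp [s12, s02, s01] <;> linarith)
  simp only [Matrix.smul_apply, Matrix.add_apply, smul_eq_mul] at hν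
  refine ⟨ν, ?_, ?_⟩
  · have g0 := hν 0 0
    have g1 := hν 1 1
    have g2 := hν 2 2
    simp only [Matrix.one_apply_eq] at g0 g1 g2
    nlinarith
  · ext i j
    rw [axisRotation_apply, ← hν i j, Matrix.one_apply]
    ring

lemma IsSO3.exists_axis {z : Mat3} (hz : IsSO3 z) (hω : 0 < rotAngle z) :
    ∃ ν : Fin 3 → ℝ, ν 0 ^ 2 + ν 1 ^ 2 + ν 2 ^ 2 = 1 ∧
      z = axisRotation (Real.cos (rotAngle z)) (Real.sin (rotAngle z)) ν := by
  have hC := hz.cos_rotAngle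
  have hSC := Real.sin_sq_add_cos_sq (rotAngle z)
  have hωπ : rotAngle z ≤ π := Real.arccos_le_pi _
  rcases (Real.sin_nonneg_of_nonneg_of_le_pi hω.le hωπ).eq_or_lt with h0 | hpos
  · rw [← h0] at hSC ⊢
    have hC1 : Real.cos (rotAngle z) ≠ 1 := fun h => by
      have := (Real.cos_eq_one_iff_of_lt_of_lt (by linarith) (by linarith [Real.pi_pos])).1 h
      linarith
    have hCm : Real.cos (rotAngle z) = -1 := by
      rcases sq_eq_one_iff.1
        (by linarith : Real.cos (rotAngle z) ^ 2 = 1) with h | h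
      · exact absurd h hC1
      · exact h
    rw [hCm]
    exact hz.exists_axis_of_trace_eq (by linarith)
  · rw [hC]
    refine hz.exists_axis_of_sin_pos hpos ?_
    rw [hC] at hSC
    linear_combination 4 * hSC

end

section

variable {C S : ℝ} {ν : Fin 3 → ℝ} {x y : Mat3}

/-- The Kronecker delta on `Fin 3`. -/
noncomputable def kdelta (i j : Fin 3) : ℝ := if i = j then 1 else 0

lemma halfTrace_Lgen (hz : y.transpose * x = axisRotation C S ν) (i : Fin 3) :
    halfTrace (Lgen i) x y = -(S * ν i) := by
  rw [halfTrace, hz]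
  fin_cases i <;>
    simp [Matrix.trace_fin_three, Matrix.mul_apply, Fin.sum_univ_three, axisRotation_apply,
      crossMat_eq, Lgen] <;> ring

lemma halfTrace_Lgen_mul_Lgen (hν : ν 0 ^ 2 + ν 1 ^ 2 + ν 2 ^ 2 = 1)
    (hz : y.transpose * x = axisRotation C S ν) (i j : Fin 3) :
    halfTrace (Lgen i * Lgen j) x y =
      ((1 - C) * (ν i * ν j) + S * crossMat ν i j - (1 + C) * kdelta i j) / 2 := by
  rw [halfTrace, hz]
  fin_cases i <;> fin_cases j <;>
    simp [Matrix.trace_fin_three, Matrix.mul_apply, Fin.sum_univ_three, axisRotation_apply,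
      crossMat_eq, Lgen, kdelta] <;> grind

lemma halfTrace_Lgen_mul_Lgen_mul_Lgen (hν : ν 0 ^ 2 + ν 1 ^ 2 + ν 2 ^ 2 = 1)
    (hz : y.transpose * x = axisRotation C S ν) (i j k : Fin 3) :
    halfTrace (Lgen j * (Lgen i * Lgen k)) x y =
      (-C * (ν i * crossMat ν j k + ν j * crossMat ν k i + ν k * crossMat ν i j) -
        (1 - C) * (ν i * crossMat ν j k) + S * (kdelta i j * ν k + kdelta i k * ν j)) / 2 := by
  rw [halfTrace, hz]
  fin_cases i <;> fin_cases j <;> fin_cases k <;>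
    simp [Matrix.trace_fin_three, Matrix.mul_apply, Fin.sum_univ_three, axisRotation_apply,
      crossMat_eq, Lgen, kdelta] <;> grind

lemma crossMat_self (i : Fin 3) : crossMat ν i i = 0 := by
  rw [crossMat_eq]
  fin_cases i <;> simp

lemma crossMat_swap (i j : Fin 3) : crossMat ν j i = -crossMat ν i j := by
  rw [crossMat_eq]
  fin_cases i <;> fin_cases j <;> simp

lemma eps3_mul_axis {i j n : Fin 3} (hij : i ≠ j) (hjn : j ≠ n) (hin : i ≠ n) :
    eps3 j i n * ν n = crossMat ν i j := by
  rw [crossMat_eq]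
  fin_cases i <;> fin_cases j <;> fin_cases n <;> simp [eps3] at hij hjn hin ⊢

lemma eps3_mul_crossMat {i j n : Fin 3} (hij : i ≠ j) (hjn : j ≠ n) (hin : i ≠ n) (k : Fin 3) :
    eps3 j i n * crossMat ν n k = kdelta i k * ν j - kdelta j k * ν i := by
  rw [crossMat_eq]
  fin_cases i <;> fin_cases j <;> fin_cases n <;> fin_cases k <;>
    simp [eps3, kdelta] at hij hjn hin ⊢

lemma eps3_mul_kdelta (hν : ν 0 ^ 2 + ν 1 ^ 2 + ν 2 ^ 2 = 1) {i j n : Fin 3}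
    (hij : i ≠ j) (hjn : j ≠ n) (hin : i ≠ n) (k : Fin 3) :
    eps3 j i n * kdelta n k =
      ν i * crossMat ν j k - ν j * crossMat ν i k + ν k * crossMat ν i j := by
  rw [crossMat_eq]
  fin_cases i <;> fin_cases j <;> fin_cases n <;> fin_cases k <;>
    simp [eps3, kdelta] at hij hjn hin ⊢ <;> grind

lemma deriv_relations (s N : ℕ) (t : ℝ) :
    sigmaDeriv s N 1 t =
      -(Real.sin t * (Polynomial.derivative^[1] (kernelPoly s N)).eval (Real.cos t)) ∧
    sigmaDeriv s N 2 t =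
      Real.sin t ^ 2 * (Polynomial.derivative^[2] (kernelPoly s N)).eval (Real.cos t) -
        Real.cos t * (Polynomial.derivative^[1] (kernelPoly s N)).eval (Real.cos t) ∧
    sigmaDeriv s N 3 t =
      -(Real.sin t ^ 3 * (Polynomial.derivative^[3] (kernelPoly s N)).eval (Real.cos t)) +
        3 * Real.sin t * Real.cos t *
          (Polynomial.derivative^[2] (kernelPoly s N)).eval (Real.cos t) +
        Real.sin t * (Polynomial.derivative^[1] (kernelPoly s N)).eval (Real.cos t) := by
  have hF : ∀ m t, HasDerivAt
      (fun t => (Polynomial.derivative^[m] (kernelPoly s N)).eval (Real.cos t))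
      ((Polynomial.derivative^[m + 1] (kernelPoly s N)).eval (Real.cos t) * -Real.sin t) t :=
    fun m t => by
      rw [Function.iterate_succ_apply']
      exact HasDerivAt.comp t (Polynomial.hasDerivAt _ _) (Real.hasDerivAt_cos t)
  have h0 : sigmaDeriv s N 0 =
      fun t => (Polynomial.derivative^[0] (kernelPoly s N)).eval (Real.cos t) := by
    rw [sigmaDeriv_zero]
    exact funext fun t => sigmaT_eq_eval_cos s N t
  have h1 : sigmaDeriv s N 1 = fun t =>
      (Polynomial.derivative^[1] (kernelPoly s N)).eval (Real.cos t) * -Real.sin t :=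
    funext fun t => (hasDerivAt_sigmaDeriv s N 0 t).unique (h0 ▸ hF 0 t)
  have h2 : sigmaDeriv s N 2 = fun t => _ :=
    funext fun t => (hasDerivAt_sigmaDeriv s N 1 t).unique
      (h1 ▸ (hF 1 t).fun_mul (Real.hasDerivAt_sin t).fun_neg)
  have h3 := (hasDerivAt_sigmaDeriv s N 2 t).unique
      (h2 ▸ (((hF 2 t).fun_mul (Real.hasDerivAt_sin t).fun_neg).fun_mul
        (Real.hasDerivAt_sin t).fun_neg).fun_add
          ((hF 1 t).fun_mul (Real.hasDerivAt_cos t).fun_neg))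
  refine ⟨?_, ?_, ?_⟩
  · rw [h1]; ring
  · rw [h2]; ring
  · rw [h3]
    ring

end

section

variable {s N : ℕ} {ν : Fin 3 → ℝ} {x y : Mat3}

lemma sigmaDeriv_rotAngle (s N : ℕ) (hx : IsSO3 x) (hy : IsSO3 y) {ω : ℝ}
    (hω : ω = rotAngle (y.transpose * x)) :
    sigmaDeriv s N 1 ω = -(Real.sin ω * kernelPolyDeriv s N 1 x y) ∧
    sigmaDeriv s N 2 ω =
      Real.sin ω ^ 2 * kernelPolyDeriv s N 2 x y - Real.cos ω * kernelPolyDeriv s N 1 x y ∧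
    sigmaDeriv s N 3 ω =
      -(Real.sin ω ^ 3 * kernelPolyDeriv s N 3 x y) +
        3 * Real.sin ω * Real.cos ω * kernelPolyDeriv s N 2 x y +
        Real.sin ω * kernelPolyDeriv s N 1 x y := by
  have hcos : halfTrace 1 x y - 1 / 2 = Real.cos ω := by
    rw [hω, (hy.transpose.mul hx).cos_rotAngle, halfTrace, Matrix.mul_one]
    ring
  simp only [kernelPolyDeriv, hcos]
  exact deriv_relations s N ω

/-- The factor `cot (ω / 2) / 2`. -/
noncomputable def halfCot (ω : ℝ) : ℝ := Real.sin ω / (2 * (1 - Real.cos ω))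

lemma halfCot_mul_one_sub_cos {ω : ℝ} (h : Real.cos ω < 1) :
    halfCot ω * (1 - Real.cos ω) = Real.sin ω / 2 := by
  have : 1 - Real.cos ω ≠ 0 := by linarith
  rw [halfCot]
  field_simp

lemma halfCot_mul_sin {ω : ℝ} (h : Real.cos ω < 1) :
    halfCot ω * Real.sin ω = (1 + Real.cos ω) / 2 := by
  have : 1 - Real.cos ω ≠ 0 := by linarith
  rw [halfCot]
  field_simp
  linear_combination Real.sin_sq_add_cos_sq ω

lemma halfCot_nonneg {ω : ℝ} (h0 : 0 ≤ ω) (hπ : ω ≤ π) : 0 ≤ halfCot ω :=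
  div_nonneg (Real.sin_nonneg_of_nonneg_of_le_pi h0 hπ)
    (by linarith [Real.cos_le_one ω])

lemma halfCot_mul_le_one {ω : ℝ} (h0 : 0 < ω) (hπ : ω ≤ π) : halfCot ω * ω ≤ 1 := by
  have hs : 0 < Real.sin (ω / 2) := Real.sin_pos_of_pos_of_lt_pi (by linarith) (by linarith)
  have hle : ω / 2 * Real.cos (ω / 2) ≤ Real.sin (ω / 2) := by
    rcases hπ.eq_or_lt with rfl | hlt
    · rw [Real.cos_pi_div_two, mul_zero]
      exact hs.le
    · have hc : 0 < Real.cos (ω / 2) :=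
        Real.cos_pos_of_mem_Ioo ⟨by linarith, by linarith⟩
      have := Real.le_tan (x := ω / 2) (by linarith) (by linarith)
      rwa [Real.tan_eq_sin_div_cos, le_div_iff₀ hc] at this
  have e1 : Real.sin ω = 2 * Real.sin (ω / 2) * Real.cos (ω / 2) := by
    rw [← Real.sin_two_mul]; ring_nf
  have e2 : 1 - Real.cos ω = 2 * Real.sin (ω / 2) ^ 2 := by
    have := Real.cos_two_mul (ω / 2)
    rw [mul_div_cancel₀ ω two_ne_zero] at this
    linear_combination -this - 2 * Real.sin_sq_add_cos_sq (ω / 2)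
  rw [halfCot, e1, e2, div_mul_eq_mul_div, div_le_one (by positivity)]
  nlinarith

lemma Xx_Xx_sigmaK_sub (hν : ν 0 ^ 2 + ν 1 ^ 2 + ν 2 ^ 2 = 1) (hx : IsSO3 x) (hy : IsSO3 y)
    {ω : ℝ} (hω : ω = rotAngle (y.transpose * x)) (hcos : Real.cos ω < 1)
    (hz : y.transpose * x = axisRotation (Real.cos ω) (Real.sin ω) ν)
    {i j n : Fin 3} (hij : i ≠ j) (hjn : j ≠ n) (hin : i ≠ n) :
    Xx j (Xx i (sigmaK s N)) x y - eps3 j i n / 2 * Xx n (sigmaK s N) x y =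
      ν i * ν j * (sigmaDeriv s N 2 ω - halfCot ω * sigmaDeriv s N 1 ω) := by
  obtain ⟨h1, h2, -⟩ := sigmaDeriv_rotAngle s N hx hy hω
  rw [Xx_Xx_sigmaK i j hx hy, Xx_sigmaK n hx hy, h1, h2, halfTrace_Lgen hz, halfTrace_Lgen hz,
    halfTrace_Lgen hz, halfTrace_Lgen_mul_Lgen hν hz, crossMat_swap i j,
    show kdelta j i = 0 from if_neg hij.symm]
  linear_combination kernelPolyDeriv s N 1 x y * Real.sin ω / 2 * eps3_mul_axis (ν := ν) hij hjn hin
    - ν i * ν j * kernelPolyDeriv s N 1 x y * halfCot_mul_sin hcos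

lemma Xx_Xx_Xy_sigmaK_sub (hν : ν 0 ^ 2 + ν 1 ^ 2 + ν 2 ^ 2 = 1) (hx : IsSO3 x) (hy : IsSO3 y)
    {ω : ℝ} (hω : ω = rotAngle (y.transpose * x)) (hcos : Real.cos ω < 1)
    (hz : y.transpose * x = axisRotation (Real.cos ω) (Real.sin ω) ν)
    {i j k n : Fin 3} {e : ℝ} (he : e * ν n = crossMat ν i j)
    (heW : e * crossMat ν n k = kdelta i k * ν j - kdelta j k * ν i)
    (heδ : e * kdelta n k =
      ν i * crossMat ν j k - ν j * crossMat ν i k + ν k * crossMat ν i j) :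
    Xx j (Xx i (Xy k (sigmaK s N))) x y - e / 2 * Xx n (Xy k (sigmaK s N)) x y =
      -(sigmaDeriv s N 3 ω * (ν i * ν j * ν k) +
        (sigmaDeriv s N 2 ω - halfCot ω * sigmaDeriv s N 1 ω) *
          (halfCot ω * (kdelta i j * ν k + kdelta j k * ν i + kdelta i k * ν j -
              3 * (ν i * ν j * ν k)) -
            (ν i * crossMat ν j k + ν j * crossMat ν i k) / 2) -
        sigmaDeriv s N 1 ω * ((kdelta i j - ν i * ν j) * ν k) / 4) := by
  obtain ⟨h1, h2, h3⟩ := sigmaDeriv_rotAngle s N hx hy hω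
  have hD : sigmaDeriv s N 2 ω - halfCot ω * sigmaDeriv s N 1 ω =
      Real.sin ω ^ 2 * kernelPolyDeriv s N 2 x y +
        kernelPolyDeriv s N 1 x y * (1 - Real.cos ω) / 2 := by
    rw [h1, h2]
    linear_combination kernelPolyDeriv s N 1 x y * halfCot_mul_sin hcos
  have hδ : kdelta j i = kdelta i j := by simp only [kdelta, eq_comm]
  rw [hD, h1, h3, Xx_Xx_Xy_sigmaK i j k hx hy, Xx_Xy_sigmaK n k hx hy,
    halfTrace_Lgen_mul_Lgen_mul_Lgen hν hz]
  simp only [halfTrace_Lgen hz, halfTrace_Lgen_mul_Lgen hν hz]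
  rw [crossMat_swap i j, crossMat_swap i k, hδ]
  linear_combination
    kernelPolyDeriv s N 2 x y * Real.sin ω ^ 2 * ν k / 2 * he +
    kernelPolyDeriv s N 1 x y / 4 * ((1 - Real.cos ω) * ν k * he + Real.sin ω * heW -
      (1 + Real.cos ω) * heδ) +
    (kdelta i j * ν k + kdelta j k * ν i + kdelta i k * ν j - 3 * (ν i * ν j * ν k)) *
      (kernelPolyDeriv s N 2 x y * Real.sin ω * halfCot_mul_sin hcos +
        kernelPolyDeriv s N 1 x y / 2 * halfCot_mul_one_sub_cos hcos)

end

section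

variable {ν : Fin 3 → ℝ}

lemma axis_sq_add_sq_le (hν : ν 0 ^ 2 + ν 1 ^ 2 + ν 2 ^ 2 = 1) {i j : Fin 3} (hij : i ≠ j) :
    ν i ^ 2 + ν j ^ 2 ≤ 1 := by
  fin_cases i <;> fin_cases j <;> simp at hij ⊢ <;>
    linarith [sq_nonneg (ν 0), sq_nonneg (ν 1), sq_nonneg (ν 2)]

lemma axis_abs_le (hν : ν 0 ^ 2 + ν 1 ^ 2 + ν 2 ^ 2 = 1) (i : Fin 3) : |ν i| ≤ 1 := by
  rw [← sq_le_one_iff_abs_le_one]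
  fin_cases i <;> dsimp <;> linarith [sq_nonneg (ν 0), sq_nonneg (ν 1), sq_nonneg (ν 2)]

lemma abs_crossMat_le (hν : ν 0 ^ 2 + ν 1 ^ 2 + ν 2 ^ 2 = 1) (i j : Fin 3) :
    |crossMat ν i j| ≤ 1 := by
  rw [crossMat_eq]
  fin_cases i <;> fin_cases j <;> simp [axis_abs_le hν]

lemma abs_axis_mul_le (hν : ν 0 ^ 2 + ν 1 ^ 2 + ν 2 ^ 2 = 1) {i j : Fin 3} (hij : i ≠ j) :
    |ν i * ν j| ≤ 1 / 2 := by
  have h := axis_sq_add_sq_le hν hij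
  rw [abs_le]
  constructor <;> nlinarith [sq_nonneg (ν i - ν j), sq_nonneg (ν i + ν j)]

lemma abs_sub_cube_le {a : ℝ} (ha : |a| ≤ 1) :
    |3 * a - 3 * (a * a * a)| ≤ 2 * (1 - |a * a * a|) := by
  have e : 3 * a - 3 * (a * a * a) = 3 * (1 - |a| ^ 2) * a := by rw [sq_abs]; ring
  have h0 := abs_nonneg a
  rw [e, abs_mul, abs_of_nonneg (by nlinarith), abs_mul, abs_mul]
  nlinarith [mul_nonneg (sq_nonneg (1 - |a|)) (by linarith : 0 ≤ |a| + 2)]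

lemma abs_sub_sq_mul_le {a b : ℝ} (h : a ^ 2 + b ^ 2 ≤ 1) :
    |b - 3 * (a * a * b)| ≤ 2 * (1 - |a * a * b|) := by
  have e : b - 3 * (a * a * b) = (1 - 3 * a ^ 2) * b := by ring
  have h0 := abs_nonneg b
  have hb : |b| ≤ 1 := by
    rw [← sq_le_one_iff_abs_le_one]
    linarith [sq_nonneg a]
  have hab : a ^ 2 ≤ 1 - |b| ^ 2 := by rw [sq_abs]; linarith
  rw [e, abs_mul, abs_mul, abs_mul_self, ← sq]
  rcases abs_cases (1 - 3 * a ^ 2) with ⟨h1, -⟩ | ⟨h1, -⟩ <;> rw [h1]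
  · nlinarith [mul_nonneg (sq_nonneg a) h0]
  · nlinarith [mul_le_mul_of_nonneg_right hab h0, mul_nonneg h0 (sq_nonneg (|b| - 1 / 2)),
      sq_nonneg (|b| - 1 / 2)]

lemma abs_mul_mul_le {a b c : ℝ} (h : a ^ 2 + b ^ 2 + c ^ 2 = 1) :
    3 * |a * b * c| ≤ 2 * (1 - |a * b * c|) := by
  have h0 := abs_nonneg c
  have hc : |c| ≤ 1 := by
    rw [← sq_le_one_iff_abs_le_one]
    linarith [sq_nonneg a, sq_nonneg b]
  have hab : |a| * |b| ≤ (1 - |c| ^ 2) / 2 := by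
    have := sq_nonneg (|a| - |b|)
    rw [sq_abs]
    nlinarith [sq_abs a, sq_abs b]
  rw [abs_mul, abs_mul]
  nlinarith [mul_le_mul_of_nonneg_right hab h0, mul_nonneg h0 (sq_nonneg (|c| - 1 / 2)),
      sq_nonneg (|c| - 1 / 2)]

lemma kdelta_self (i : Fin 3) : kdelta i i = 1 := if_pos rfl

lemma kdelta_of_ne {i j : Fin 3} (h : i ≠ j) : kdelta i j = 0 := if_neg h

lemma abs_symm_coeff_le (hν : ν 0 ^ 2 + ν 1 ^ 2 + ν 2 ^ 2 = 1) (i j k : Fin 3) :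
    |kdelta i j * ν k + kdelta j k * ν i + kdelta i k * ν j - 3 * (ν i * ν j * ν k)| ≤
      2 * (1 - |ν i * ν j * ν k|) := by
  by_cases hij : i = j
  · subst hij
    by_cases hik : i = k
    · subst hik
      rw [kdelta_self]
      convert abs_sub_cube_le (axis_abs_le hν i) using 2
      ring
    · rw [kdelta_self, kdelta_of_ne hik]
      convert abs_sub_sq_mul_le (axis_sq_add_sq_le hν hik) using 2
      ring
  · by_cases hik : i = k
    · subst hik
      rw [kdelta_self, kdelta_of_ne hij, kdelta_of_ne (Ne.symm hij)]
      convert abs_sub_sq_mul_le (axis_sq_add_sq_le hν hij) using 2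
      · ring
      · ring_nf
    · by_cases hjk : j = k
      · subst hjk
        rw [kdelta_self, kdelta_of_ne hij]
        convert abs_sub_sq_mul_le (axis_sq_add_sq_le hν (Ne.symm hij)) using 2
        · ring
        · ring_nf
      · rw [kdelta_of_ne hij, kdelta_of_ne hik, kdelta_of_ne hjk]
        have h : ν i ^ 2 + ν j ^ 2 + ν k ^ 2 = 1 := by
          rw [← hν]
          fin_cases i <;> fin_cases j <;> fin_cases k <;> simp at hij hik hjk ⊢ <;> ring
        have := abs_mul_mul_le h
        simp only [zero_mul, add_zero, zero_sub, abs_neg]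
        rwa [abs_mul, abs_of_pos (by norm_num : (0 : ℝ) < 3)]

lemma abs_third_order_le {s K M c q κ E B d₁ d₂ d₃ : ℝ} (hs : 6 ≤ s) (hM : 13 ≤ M) (hK : 0 ≤ K)
    (h₁ : |d₁| ≤ 4 * s * (K * M)) (hD : |d₂ - c * d₁| ≤ (10.56 * s + 2) * (K * M ^ 2))
    (h₃ : |d₃| ≤ (18 * s - 4) * (K * M ^ 3)) (hc0 : 0 ≤ c) (hc : c ≤ 0.64 * M)
    (hκ : |κ| ≤ 2 * (1 - |q|)) (hE : |E| ≤ 2) (hB : |B| ≤ 2) :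
    |-(d₃ * q + (d₂ - c * d₁) * (c * κ - E / 2) - d₁ * B / 4)| ≤
      1.2 * (18 * s - 4) * (K * M ^ 3) := by
  have hq := abs_nonneg q
  have hq1 : |q| ≤ 1 := by linarith [abs_nonneg κ]
  have t3 : |d₃ * q| ≤ (18 * s - 4) * (K * M ^ 3) * |q| := by
    rw [abs_mul]
    gcongr
  have t2 : |(d₂ - c * d₁) * (c * κ - E / 2)| ≤
      (10.56 * s + 2) * (K * M ^ 2) * (0.64 * M * (2 * (1 - |q|)) + M / 13) := by
    rw [abs_mul]
    refine mul_le_mul hD ?_ (abs_nonneg _) (by positivity)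
    refine (abs_sub _ _).trans ?_
    rw [abs_mul, abs_of_nonneg hc0, abs_div, abs_two]
    have := mul_le_mul hc hκ (abs_nonneg _) (by positivity)
    linarith
  have hM2 : K * M ≤ K * M ^ 3 / 169 := by
    have : M * 169 ≤ M * M ^ 2 := by
      gcongr
      nlinarith
    nlinarith
  have t1 : |d₁ * B / 4| ≤ 2 * s / 169 * (K * M ^ 3) := by
    rw [abs_div, abs_mul, abs_of_pos (by norm_num : (0 : ℝ) < 4)]
    have := mul_le_mul h₁ hB (abs_nonneg _) (by positivity)
    nlinarith
  have hsum : |-(d₃ * q + (d₂ - c * d₁) * (c * κ - E / 2) - d₁ * B / 4)| ≤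
      |d₃ * q| + |(d₂ - c * d₁) * (c * κ - E / 2)| + |d₁ * B / 4| := by
    rw [abs_neg]
    exact (abs_sub _ _).trans (by gcongr; exact abs_add_le _ _)
  have hP : 0 ≤ K * M ^ 3 := by positivity
  have hcoef : (18 * s - 4) * |q| + (10.56 * s + 2) * (1.28 * (1 - |q|) + 1 / 13) + 2 * s / 169 ≤
      1.2 * (18 * s - 4) := by
    nlinarith
  calc _ ≤ ((18 * s - 4) * |q| + (10.56 * s + 2) * (1.28 * (1 - |q|) + 1 / 13) + 2 * s / 169) *
        (K * M ^ 3) := by linarith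
    _ ≤ _ := by gcongr

end

/-- The common factor in the decay bounds of the kernel and its derivatives. -/
noncomputable def decayFactor (s N : ℕ) (ω : ℝ) : ℝ :=
  0.51 * (s - 1).factorial * 2 ^ s / (((N : ℝ) + 1) * ω) ^ s

lemma decayFactor_nonneg {s N : ℕ} {ω : ℝ} (hω : 0 < ω) : 0 ≤ decayFactor s N ω := by
  unfold decayFactor
  positivity

lemma decayFactor_mul_pow {s N l : ℕ} {ω : ℝ} (hl : l ≤ s) (hω : 0 < ω) :
    decayFactor s N ω * ((N : ℝ) + 1) ^ l =
      0.51 * (s - 1).factorial * 2 ^ s / (((N : ℝ) + 1) ^ (s - l) * ω ^ s) := by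
  have hM : (0 : ℝ) < (N : ℝ) + 1 := by positivity
  have h : ((N : ℝ) + 1) ^ s = ((N : ℝ) + 1) ^ (s - l) * ((N : ℝ) + 1) ^ l := by
    rw [← pow_add, Nat.sub_add_cancel hl]
  rw [decayFactor, mul_pow, h]
  field_simp

lemma halfCot_le {ω M : ℝ} (hM : 0 < M) (hω : π / (2 * M) ≤ ω) (hπ : ω ≤ π) :
    halfCot ω ≤ 0.64 * M := by
  have hω0 : 0 < ω := lt_of_lt_of_le (by positivity) hω
  have h0 := halfCot_nonneg hω0.le hπ
  have h1 := (mul_le_mul_of_nonneg_left hω h0).trans (halfCot_mul_le_one hω0 hπ)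
  rw [mul_div_assoc', div_le_one (by positivity)] at h1
  nlinarith [Real.pi_gt_d2]

theorem localized_hessian_kernel_bounds
    (s N : ℕ) (hs_even : Even s) (hs : 6 ≤ s) (hN : 2 * s ≤ N)
    (x y : Mat3) (hx : IsSO3 x) (hy : IsSO3 y)
    (hsep : π / (2 * ((N : ℝ) + 1)) ≤ rotAngle (y⁻¹ * x)) :
    (∀ i k : Fin 3,
      |Xx i (Xx i (Xy k (sigmaK s N))) x y| ≤
        1.2 * cConst 3 s / (((N : ℝ) + 1) ^ (s - 3) * rotAngle (y⁻¹ * x) ^ s)) ∧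
    (∀ i j n : Fin 3, i ≠ j → j ≠ n → i ≠ n →
      (|Xx j (Xx i (sigmaK s N)) x y - (eps3 j i n / 2) * Xx n (sigmaK s N) x y| ≤
          cConst 2 s / (((N : ℝ) + 1) ^ (s - 2) * rotAngle (y⁻¹ * x) ^ s)) ∧
      ∀ k : Fin 3, k = i ∨ k = j ∨ k = n →
        |Xx j (Xx i (Xy k (sigmaK s N))) x y
            - (eps3 j i n / 2) * Xx n (Xy k (sigmaK s N)) x y| ≤
          1.2 * cConst 3 s / (((N : ℝ) + 1) ^ (s - 3) * rotAngle (y⁻¹ * x) ^ s)) := by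
  rw [hy.inv_eq] at hsep ⊢
  set ω := rotAngle (y.transpose * x) with hω
  have hωπ : ω ≤ π := Real.arccos_le_pi _
  have hω0 : 0 < ω := lt_of_lt_of_le (by positivity) hsep
  obtain ⟨ν, hν, hz⟩ := (hy.transpose.mul hx).exists_axis hω0
  rw [← hω] at hz
  have hcos : Real.cos ω < 1 := by
    rw [← Real.cos_zero]
    exact Real.cos_lt_cos_of_nonneg_of_le_pi le_rfl hωπ hω0
  have hM : (13 : ℝ) ≤ (N : ℝ) + 1 := by
    have : 12 ≤ N := by omega
    have : (12 : ℝ) ≤ N := by exact_mod_cast this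
    linarith
  have hsR : (6 : ℝ) ≤ s := by exact_mod_cast hs
  have hK := decayFactor_nonneg (s := s) (N := N) hω0
  have hbound : ∀ l ≤ 3, |sigmaDeriv s N l ω| ≤
      decayConst s l * (decayFactor s N ω * ((N : ℝ) + 1) ^ l) := fun l hl =>
    (abs_sigmaDeriv_le hs_even hs hN hω0 hωπ hl).trans_eq (by rw [decayFactor]; ring)
  have h1 : |sigmaDeriv s N 1 ω| ≤ 4 * s * (decayFactor s N ω * ((N : ℝ) + 1)) := by
    simpa [decayConst] using hbound 1 (by norm_num)
  have h2 : |sigmaDeriv s N 2 ω| ≤ (8 * s + 2) * (decayFactor s N ω * ((N : ℝ) + 1) ^ 2) := by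
    simpa [decayConst] using hbound 2 (by norm_num)
  have h3 : |sigmaDeriv s N 3 ω| ≤ (18 * s - 4) * (decayFactor s N ω * ((N : ℝ) + 1) ^ 3) := by
    simpa [decayConst] using hbound 3 (by norm_num)
  have hc0 := halfCot_nonneg hω0.le hωπ
  have hc := halfCot_le (by linarith) hsep hωπ
  have hD : |sigmaDeriv s N 2 ω - halfCot ω * sigmaDeriv s N 1 ω| ≤
      (10.56 * s + 2) * (decayFactor s N ω * ((N : ℝ) + 1) ^ 2) := by
    refine (abs_sub _ _).trans ?_
    rw [abs_mul, abs_of_nonneg hc0]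
    have := mul_le_mul hc h1 (abs_nonneg _) (by positivity)
    nlinarith
  have third : ∀ (i j k n : Fin 3) (e : ℝ), e * ν n = crossMat ν i j →
      e * crossMat ν n k = kdelta i k * ν j - kdelta j k * ν i →
      e * kdelta n k = ν i * crossMat ν j k - ν j * crossMat ν i k + ν k * crossMat ν i j →
      |Xx j (Xx i (Xy k (sigmaK s N))) x y - e / 2 * Xx n (Xy k (sigmaK s N)) x y| ≤
        1.2 * cConst 3 s / (((N : ℝ) + 1) ^ (s - 3) * ω ^ s) := by
    intro i j k n e he heW heδ
    rw [Xx_Xx_Xy_sigmaK_sub hν hx hy hω hcos hz he heW heδ]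
    have hi := axis_abs_le hν i
    have hj := axis_abs_le hν j
    have hk := axis_abs_le hν k
    have hE : |ν i * crossMat ν j k + ν j * crossMat ν i k| ≤ 2 := by
      refine (abs_add_le _ _).trans ?_
      rw [abs_mul, abs_mul]
      linarith [mul_le_one₀ hi (abs_nonneg _) (abs_crossMat_le hν j k),
        mul_le_one₀ hj (abs_nonneg _) (abs_crossMat_le hν i k)]
    have hB : |(kdelta i j - ν i * ν j) * ν k| ≤ 2 := by
      have hδ : |kdelta i j| ≤ 1 := by
        unfold kdelta
        split_ifs <;> simp
      have hsub := abs_sub (kdelta i j) (ν i * ν j)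
      rw [abs_mul (ν i)] at hsub
      rw [abs_mul]
      nlinarith [mul_le_one₀ hi (abs_nonneg _) hj, abs_nonneg (ν k),
        abs_nonneg (kdelta i j - ν i * ν j)]
    refine (abs_third_order_le hsR hM hK h1 hD h3 hc0 hc (abs_symm_coeff_le hν i j k)
      hE hB).trans_eq ?_
    rw [decayFactor_mul_pow (by omega) hω0, cConst]
    · ring
    all_goals simp
  refine ⟨fun i k => ?_, fun i j n hij hjn hin => ⟨?_, fun k _ => ?_⟩⟩
  · have := third i i k i 0 (by rw [crossMat_self, zero_mul]) (by ring)
      (by rw [crossMat_self]; ring)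
    simpa using this
  · rw [Xx_Xx_sigmaK_sub hν hx hy hω hcos hz hij hjn hin, abs_mul]
    have hP : 0 ≤ decayFactor s N ω * ((N : ℝ) + 1) ^ 2 := by positivity
    calc _ ≤ 1 / 2 * ((10.56 * s + 2) * (decayFactor s N ω * ((N : ℝ) + 1) ^ 2)) :=
          mul_le_mul (abs_axis_mul_le hν hij) hD (abs_nonneg _) (by norm_num)
      _ ≤ (8 * s + 2) * (decayFactor s N ω * ((N : ℝ) + 1) ^ 2) := by nlinarith
      _ = _ := by
        rw [decayFactor_mul_pow (by omega) hω0, cConst]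
        ring
  · exact third i j k n _ (eps3_mul_axis hij hjn hin) (eps3_mul_crossMat hij hjn hin k)
      (eps3_mul_kdelta hν hij hjn hin k)
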